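/- arXiv:2208.02109 — 7 statements merged into one kernel-verified Lean document; each statement's English description precedes it below -/
import Mathlib

section
/- Let d ≥ 2 be an integer and let u ∈ U_d. Then for every k with 1 ≤ k ≤ d−1 one has p_k(u⁻¹) = (−1)^{k(d+1)} · p_{d−k}(u). In particular, if p_k(u) ≠ 0 for all 1 ≤ k ≤ d−1, then p_k(u⁻¹) ≠ 0 for all 1 ≤ k ≤ d−1; that is, the inversion map u ↦ u⁻¹ maps S_d into itself. -/
/-- `u` is upper triangular with all diagonal entries equal to `1`. -/
def IsUniUpper (d : ℕ) (u : Matrix (Fin d) (Fin d) ℝ) : Prop :=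
  (∀ i j : Fin d, (j : ℕ) < (i : ℕ) → u i j = 0) ∧ (∀ i : Fin d, u i i = 1)

/-- `p_k(u)`: the determinant of the upper-right `k × k` block of `u`
(rows `1,…,k` and columns `d−k+1,…,d`, in one-based indexing). -/
noncomputable def cornerMinor (d k : ℕ) (u : Matrix (Fin d) (Fin d) ℝ) : ℝ :=
  Matrix.det (Matrix.of fun i j : Fin k =>
    if h : (i : ℕ) < d ∧ d - k + (j : ℕ) < d then u ⟨i, h.1⟩ ⟨d - k + j, h.2⟩ else 0)

/-- `S_d = {u ∈ U_d : p_k(u) ≠ 0 for all 1 ≤ k ≤ d−1}`. -/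
def Sset (d : ℕ) : Set (Matrix (Fin d) (Fin d) ℝ) :=
  {u | IsUniUpper d u ∧ ∀ k : ℕ, 1 ≤ k → k ≤ d - 1 → cornerMinor d k u ≠ 0}

/-!
If `A * B = 1` in block form, then `A * [[1, B₁₂], [0, B₂₂]] = [[A₁₁, 0], [A₂₁, 1]]`, and taking
determinants gives `det A * det B₂₂ = det A₁₁`. Take for `A` the matrix `u`, of size `m + k`, with
its columns rotated by `k` places, and for `B` the inverse `u⁻¹` with its rows rotated accordingly:
then `A₁₁` is the upper-right `m × m` block of `u`, `B₂₂` is the upper-right `k × k` block of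
`u⁻¹`, and `det A` is `det u` up to the sign `(-1) ^ (m * k)` of the rotation.
-/

section ComplementaryMinors

open Matrix

variable {R m n ι : Type*} [CommRing R] [Fintype m] [Fintype n] [Fintype ι]
  [DecidableEq m] [DecidableEq n] [DecidableEq ι]

theorem det_mul_det_toBlocks₂₂_of_mul_eq_one {A B : Matrix (m ⊕ n) (m ⊕ n) R} (h : A * B = 1) :
    A.det * B.toBlocks₂₂.det = A.toBlocks₁₁.det := by
  have block_eq : A * fromBlocks 1 B.toBlocks₁₂ 0 B.toBlocks₂₂ =
      fromBlocks A.toBlocks₁₁ 0 A.toBlocks₂₁ 1 := by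
    rw [← fromBlocks_toBlocks A, ← fromBlocks_toBlocks B, fromBlocks_multiply,
      ← fromBlocks_one, fromBlocks_inj] at h
    obtain ⟨-, h₁₂, -, h₂₂⟩ := h
    nth_rw 1 [← fromBlocks_toBlocks A]
    simp [fromBlocks_multiply, h₁₂, h₂₂]
  simpa using congrArg det block_eq

theorem sign_mul_det_mul_det_submatrix_of_mul_eq_one {A B : Matrix ι ι R} (h : A * B = 1)
    (e : m ⊕ n ≃ ι) (σ : Equiv.Perm ι) :
    σ.sign * A.det * (B.submatrix (σ ∘ e ∘ Sum.inr) (e ∘ Sum.inr)).det =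
      (A.submatrix (e ∘ Sum.inl) (σ ∘ e ∘ Sum.inl)).det := by
  have mul_eq_one : A.submatrix e (e.trans σ) * B.submatrix (e.trans σ) e = 1 := by
    rw [submatrix_mul_equiv, h, submatrix_one_equiv]
  have det_eq : (A.submatrix e (e.trans σ)).det = σ.sign * A.det := by
    rw [← det_permute' σ A, ← det_submatrix_equiv_self e (A.submatrix id σ)]
    rfl
  rw [← det_eq]
  exact det_mul_det_toBlocks₂₂_of_mul_eq_one mul_eq_one

end ComplementaryMinors

theorem coe_finRotate_pow_apply (n k : ℕ) (i : Fin n) :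
    ((finRotate n ^ k) i : ℕ) = (i + k) % n := by
  induction k with
  | zero => simp [Nat.mod_eq_of_lt i.isLt]
  | succ k ih =>
    have := i.neZero
    rw [pow_succ', Equiv.Perm.mul_apply, finRotate_apply, Fin.val_add, ih]
    simp [Nat.add_assoc]

theorem sign_finRotate_add_pow (m k : ℕ) :
    (finRotate (m + k) ^ k).sign = (-1) ^ (m * k) := by
  cases k with
  | zero => simp
  | succ k =>
    rw [map_pow, sign_finRotate, ← pow_mul, ← add_assoc, Nat.add_sub_cancel, add_mul, pow_add,
      (Nat.even_mul_succ_self k).neg_one_pow, mul_one]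

theorem cornerMinor_eq_det_submatrix {d k : ℕ} (u : Matrix (Fin d) (Fin d) ℝ)
    {r c : Fin k → Fin d} (hr : ∀ i, (r i : ℕ) = i) (hc : ∀ j, (c j : ℕ) = d - k + j) :
    cornerMinor d k u = (u.submatrix r c).det := by
  unfold cornerMinor
  congr 1
  ext i j
  rw [Matrix.of_apply, dif_pos ⟨hr i ▸ (r i).isLt, hc j ▸ (c j).isLt⟩, Matrix.submatrix_apply]
  congr 1 <;> ext <;> simp [hr, hc]

theorem det_mul_cornerMinor_inv_add {m k : ℕ} {u : Matrix (Fin (m + k)) (Fin (m + k)) ℝ}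
    (hu : IsUnit u.det) :
    u.det * cornerMinor (m + k) k u⁻¹ = (-1) ^ (m * k) * cornerMinor (m + k) m u := by
  let e : Fin m ⊕ Fin k ≃ Fin (m + k) := finSumFinEquiv
  let σ : Equiv.Perm (Fin (m + k)) := finRotate (m + k) ^ k
  have corner_u :
      cornerMinor (m + k) m u = (u.submatrix (e ∘ Sum.inl) (σ ∘ e ∘ Sum.inl)).det := by
    refine cornerMinor_eq_det_submatrix u (fun i ↦ by simp [e]) fun j ↦ ?_
    have no_wrap : (k + j : ℕ) < m + k := by omega
    simp [e, σ, coe_finRotate_pow_apply, Nat.mod_eq_of_lt no_wrap, Nat.add_comm (j : ℕ) k]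
  have corner_inv :
      cornerMinor (m + k) k u⁻¹ = (u⁻¹.submatrix (σ ∘ e ∘ Sum.inr) (e ∘ Sum.inr)).det := by
    refine cornerMinor_eq_det_submatrix u⁻¹ (fun i ↦ ?_) fun j ↦ by simp [e]
    have wrap : (m + i + k : ℕ) = i + (m + k) := by ring
    have : (i : ℕ) < m + k := by omega
    simp [e, σ, coe_finRotate_pow_apply, wrap, Nat.mod_eq_of_lt this]
  have jacobi := sign_mul_det_mul_det_submatrix_of_mul_eq_one (u.mul_nonsing_inv hu) e σ
  rw [← corner_u, ← corner_inv, sign_finRotate_add_pow] at jacobi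
  rw [← jacobi]
  push_cast
  rw [← mul_assoc, ← mul_assoc, ← mul_pow]
  simp

theorem det_mul_cornerMinor_inv {d k : ℕ} (hk : k ≤ d) {u : Matrix (Fin d) (Fin d) ℝ}
    (hu : IsUnit u.det) :
    u.det * cornerMinor d k u⁻¹ = (-1) ^ (k * (d + 1)) * cornerMinor d (d - k) u := by
  obtain ⟨m, rfl⟩ := Nat.exists_eq_add_of_le' hk
  have parity : Even (k * (m + k + 1)) ↔ Even (m * k) := by
    grind
  rw [det_mul_cornerMinor_inv_add hu, Nat.add_sub_cancel, neg_one_pow_congr parity]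

theorem mul_apply_diag_of_isUpperTriangular {ι R : Type*} [Fintype ι] [LinearOrder ι]
    [NonUnitalNonAssocSemiring R] {A B : Matrix ι ι R} (hA : A.IsUpperTriangular)
    (hB : B.IsUpperTriangular) (i : ι) : (A * B) i i = A i i * B i i := by
  rw [Matrix.mul_apply]
  refine Fintype.sum_eq_single i fun j hj ↦ ?_
  rcases hj.lt_or_gt with hji | hij
  · rw [hA hji, zero_mul]
  · rw [hB hij, mul_zero]

namespace IsUniUpper

variable {d : ℕ} {u : Matrix (Fin d) (Fin d) ℝ}

theorem isUpperTriangular (hu : IsUniUpper d u) : u.IsUpperTriangular :=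
  fun i j hij ↦ hu.1 i j hij

theorem det_eq_one (hu : IsUniUpper d u) : u.det = 1 := by
  simp [Matrix.det_of_isUpperTriangular hu.isUpperTriangular, hu.2]

theorem isUnit_det (hu : IsUniUpper d u) : IsUnit u.det :=
  hu.det_eq_one ▸ isUnit_one

theorem inv (hu : IsUniUpper d u) : IsUniUpper d u⁻¹ := by
  have := u.invertibleOfIsUnitDet hu.isUnit_det
  have inv_upper : u⁻¹.IsUpperTriangular :=
    Matrix.blockTriangular_inv_of_blockTriangular hu.isUpperTriangular
  refine ⟨fun i j hij ↦ inv_upper hij, fun i ↦ ?_⟩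
  simpa [hu.2] using (mul_apply_diag_of_isUpperTriangular hu.isUpperTriangular inv_upper i).symm

end IsUniUpper

theorem jacobi_minor_relation_general (d : ℕ) (u : Matrix (Fin d) (Fin d) ℝ)
    (hu : IsUnit u.det) :
    (∀ k : ℕ, 1 ≤ k → k ≤ d - 1 →
      u.det * cornerMinor d k u⁻¹ = (-1) ^ (k * (d + 1)) * cornerMinor d (d - k) u) ∧
    ((∀ k : ℕ, 1 ≤ k → k ≤ d - 1 → cornerMinor d k u ≠ 0) →
      ∀ k : ℕ, 1 ≤ k → k ≤ d - 1 → cornerMinor d k u⁻¹ ≠ 0) ∧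
    (u ∈ Sset d → u⁻¹ ∈ Sset d) := by
  have inv_ne_zero (h : ∀ k : ℕ, 1 ≤ k → k ≤ d - 1 → cornerMinor d k u ≠ 0)
      (k : ℕ) (hk : 1 ≤ k) (hkd : k ≤ d - 1) : cornerMinor d k u⁻¹ ≠ 0 := by
    refine right_ne_zero_of_mul (a := u.det) ?_
    rw [det_mul_cornerMinor_inv (by omega) hu]
    exact mul_ne_zero (by simp) (h (d - k) (by omega) (by omega))
  exact ⟨fun k _ hkd ↦ det_mul_cornerMinor_inv (by omega) hu, inv_ne_zero,
    fun h ↦ ⟨h.1.inv, inv_ne_zero h.2⟩⟩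

theorem jacobi_minor_relation (d : ℕ) (hd : 2 ≤ d)
    (u : Matrix (Fin d) (Fin d) ℝ) (hu : IsUniUpper d u) :
    (∀ k : ℕ, 1 ≤ k → k ≤ d - 1 →
      cornerMinor d k u⁻¹ = (-1) ^ (k * (d + 1)) * cornerMinor d (d - k) u) ∧
    ((∀ k : ℕ, 1 ≤ k → k ≤ d - 1 → cornerMinor d k u ≠ 0) →
      ∀ k : ℕ, 1 ≤ k → k ≤ d - 1 → cornerMinor d k u⁻¹ ≠ 0) ∧
    (u ∈ Sset d → u⁻¹ ∈ Sset d) := by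
  simpa [hu.det_eq_one] using jacobi_minor_relation_general d u hu.isUnit_det
end

section
/- Let d be a natural number with d ≠ 5 and d ≡ 2, 3, 4, 5, or 6 (mod 8). Then for every u ∈ S_d, the inverse u⁻¹ does not lie in the connected component of S_d containing u. Equivalently, the involution u ↦ u⁻¹ of S_d does not leave invariant any connected component of S_d. -/
/-!
Elimination without pivoting shows that on a connected family in `S_d` one has
`u = l₁ * z * l₂`, with `l₁`, `l₂` lower triangular with positive diagonal, and `z` an antidiagonal
matrix of signs that is constant on the family. The group `GL d` acts on the right on its quotient
by the positive lower triangular matrices, which the Gram–Schmidt process identifies with the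
orthogonal group. Restricted to a contractible subgroup, such as the unipotent upper triangular or
the positive lower triangular one, this action lifts to the Pin group. Following the point `1` of
the Pin group, `u` moves it to `ζ · l₂` with `ζ` a lift of `z` that is constant on the family, and
`u⁻¹` moves it to `ζ⁻¹ · l₁⁻¹`. If `u` and `u⁻¹` belong to the same connected family, comparing the
two gives `ζ * ζ = 1`.

On the other hand, a lift of an orthogonal involution with `k` eigenvalues `-1` is, up to sign, a
product of `k` orthonormal vectors in the Clifford algebra with `v * v = |v|²`, so its square is
`(-1) ^ (k choose 2)`. Here `det z = det u = 1` makes `k` even, so that `ζ * ζ = 1` makes it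
divisible by four, and `d - 2 * k = trace z` is at most one in absolute value, which forces `d` to
be congruent to `-1`, `0` or `1` modulo eight.
-/

open Topology Matrix

section LiftedActions

/-- A pointed space, here a topological group with base point `1`, that contracts to its base point
while keeping it fixed. -/
def ContractsToOne (H : Type*) [TopologicalSpace H] [One H] : Prop :=
  (ContinuousMap.const H (1 : H)).HomotopicRel (ContinuousMap.id H) {1}

theorem ContractsToOne.contractibleSpace {H : Type*} [TopologicalSpace H] [One H]
    (hH : ContractsToOne H) : ContractibleSpace H :=
  (contractible_iff_id_nullhomotopic H).2 ⟨1, hH.homotopic.symm⟩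

/-- A factorization `G = L K` of a topological group, with `L ∩ K = 1` and continuous projection
`G → K`, in the manner of the Iwasawa decomposition of `GL n ℝ` into lower triangular matrices with
positive diagonal and orthogonal matrices. The factor `K` is given by a homomorphism into `G`. -/
structure IwasawaDecomposition (G K : Type*) [Group G] [TopologicalSpace G]
    [Group K] [TopologicalSpace K] where
  incl : K →ₜ* G
  lower : Subgroup G
  proj : C(G, K)
  mul_inv_mem (g : G) : g * (incl (proj g))⁻¹ ∈ lower
  eq_one_of_incl_mem {k : K} : incl k ∈ lower → k = 1

namespace IwasawaDecomposition

variable {G K E : Type*} [Group G] [TopologicalSpace G] [Group K] [TopologicalSpace K]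
  [Group E] [TopologicalSpace E] (D : IwasawaDecomposition G K)

theorem proj_mul_left {l : G} (hl : l ∈ D.lower) (g : G) : D.proj (l * g) = D.proj g := by
  have hmem := mul_mem (mul_mem (inv_mem (D.mul_inv_mem (l * g))) hl) (D.mul_inv_mem g)
  have hincl : (l * g * (D.incl (D.proj (l * g)))⁻¹)⁻¹ * l * (g * (D.incl (D.proj g))⁻¹) =
      D.incl (D.proj (l * g) * (D.proj g)⁻¹) := by
    rw [map_mul D.incl, map_inv]; group
  exact mul_inv_eq_one.1 (D.eq_one_of_incl_mem (hincl ▸ hmem))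

theorem proj_incl (k : K) : D.proj (D.incl k) = k := by
  have hmem := D.mul_inv_mem (D.incl k)
  rw [← map_inv, ← map_mul] at hmem
  exact (mul_inv_eq_one.1 (D.eq_one_of_incl_mem hmem)).symm

theorem proj_mul_incl {l : G} (hl : l ∈ D.lower) (k : K) : D.proj (l * D.incl k) = k := by
  rw [D.proj_mul_left hl, D.proj_incl]

theorem proj_incl_proj_mul (g h : G) : D.proj (D.incl (D.proj g) * h) = D.proj (g * h) := by
  rw [← D.proj_mul_left (D.mul_inv_mem g)]
  congr 1; group

/-- A lift to `E`, along `p : E →* K`, of the map `(k, h) ↦ proj (k * h)`, restricted to a subgroup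
`H` of `G`. For `H = G` or `H = lower` the latter is a right action on `K ≃ L \ G`. -/
structure IsLiftedAction (p : E →* K) {H : Subgroup G} (c : E × H → E) : Prop where
  continuous : Continuous c
  map_apply (s : E) (h : H) : p (c (s, h)) = D.proj (D.incl (p s) * h)
  apply_one (s : E) : c (s, 1) = s

variable {p : E →* K}

theorem exists_isLiftedAction [ContinuousMul G] (cov : IsCoveringMap p) {H : Subgroup G}
    (hH : ContractsToOne H) : ∃ c : E × H → E, D.IsLiftedAction p c := by
  obtain ⟨h⟩ := hH
  have hp := cov.continuous
  let Φ : C(unitInterval × (E × H), K) :=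
    ⟨fun x => D.proj (D.incl (p x.2.1) * (h (x.1, x.2.2) : G)), by fun_prop⟩
  let f : C(E × H, E) := ⟨Prod.fst, continuous_fst⟩
  have hΦ₀ (x) : Φ (0, x) = p (f x) := by simp [Φ, f, D.proj_incl]
  have hlift (t x) : p (cov.liftHomotopy Φ f hΦ₀ (t, x)) = Φ (t, x) :=
    congrFun (cov.liftHomotopy_lifts Φ f hΦ₀) (t, x)
  refine ⟨fun x => cov.liftHomotopy Φ f hΦ₀ (1, x), by fun_prop, fun s x => ?_, fun s => ?_⟩
  · rw [hlift]
    simp [Φ]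
  · have hstat (t) : Φ (t, (s, 1)) = p s := by
      simp [Φ, h.eq_fst t (Set.mem_singleton (1 : H)), D.proj_incl]
    refine (cov.const_of_comp (g := fun t => cov.liftHomotopy Φ f hΦ₀ (t, (s, 1)))
      (by fun_prop) (fun t t' => ?_) 1 0).trans (cov.liftHomotopy_zero Φ f hΦ₀ (s, 1))
    simp only [hlift, hstat]

namespace IsLiftedAction

variable {D} {H : Subgroup G} {b : E × H → E} {c : E × D.lower → E}

theorem apply_apply [IsTopologicalGroup G] [PreconnectedSpace D.lower] (hc : D.IsLiftedAction p c)
    (cov : IsCoveringMap p) (s : E) (l l' : D.lower) : c (c (s, l), l') = c (s, l * l') := by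
  have := hc.continuous
  refine congrFun (cov.eq_of_comp_eq (g₁ := fun l' => c (c (s, l), l'))
    (g₂ := fun l' => c (s, l * l')) (by fun_prop) (by fun_prop) ?_ 1 ?_) l'
  · ext l'
    simp only [Function.comp_apply, hc.map_apply, D.proj_incl_proj_mul, Subgroup.coe_mul, mul_assoc]
  · simp only [hc.apply_one, mul_one]

/-- Inverting `k * h = m * k'` gives `k'⁻¹ * m⁻¹ = h⁻¹ * k⁻¹`; both sides are lifted along `H`. -/
theorem inv_apply_inv [IsTopologicalGroup G] [ContinuousInv E] [PreconnectedSpace H]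
    (hb : D.IsLiftedAction p b) (hc : D.IsLiftedAction p c) (cov : IsCoveringMap p) {s : E}
    {g : H → E} (hg : Continuous g) (hpg : ∀ h : H, p (g h) = D.proj (h⁻¹ * D.incl (p s)⁻¹))
    (hg_one : g 1 = s⁻¹) {h : H} {m : D.lower}
    (hm : D.incl (p s) * h = m * D.incl (p (b (s, h)))) : c ((b (s, h))⁻¹, m⁻¹) = g h := by
  have := hb.continuous
  have := hc.continuous
  have := cov.continuous
  let M (h : H) : D.lower := ⟨D.incl (p s) * h * (D.incl (p (b (s, h))))⁻¹, by
    rw [hb.map_apply]; exact D.mul_inv_mem _⟩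
  have hM : Continuous M := Continuous.subtype_mk (by fun_prop) _
  have hmM : m = M h := Subtype.ext (by simp [M, hm])
  have hM_one : M 1 = 1 := Subtype.ext (by simp [M, hb.apply_one])
  rw [hmM]
  refine congrFun (cov.eq_of_comp_eq (g₁ := fun h => c ((b (s, h))⁻¹, (M h)⁻¹)) (g₂ := g)
    (by fun_prop) hg ?_ 1 ?_) h
  · ext h
    simp only [Function.comp_apply, hc.map_apply, hpg, M, map_inv, Subgroup.coe_inv]
    congr 1; group
  · simp only [hb.apply_one, hM_one, inv_one, hc.apply_one, hg_one]

theorem apply_inv_of_eq_mul [IsTopologicalGroup G] [ContinuousInv E] [PreconnectedSpace H]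
    [PreconnectedSpace D.lower] (hb : D.IsLiftedAction p b) (hc : D.IsLiftedAction p c)
    (cov : IsCoveringMap p) {u : H} {l₁ l₂ : D.lower} {z : E}
    (hu : (u : G) = l₁ * D.incl (p z) * l₂) (hz : b (1, u) = c (z, l₂)) :
    b (1, u⁻¹) = c (z⁻¹, l₁⁻¹) := by
  have := hb.continuous
  let n : D.lower := ⟨u * (D.incl (D.proj u))⁻¹, D.mul_inv_mem _⟩
  have hpb : p (b (1, u)) = D.proj u := by simp [hb.map_apply]
  have hu_inv : c ((b (1, u))⁻¹, n⁻¹) = b (1, u⁻¹) :=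
    inv_apply_inv hb hc cov (g := fun h => b (1, h⁻¹)) (by fun_prop)
      (fun h => by simp [hb.map_apply]) (by simp [hb.apply_one]) (by simp [hpb, n])
  have hz_inv : c ((c (z, l₂))⁻¹, (l₁⁻¹ * n)⁻¹) = z⁻¹ := by
    refine inv_apply_inv hc hc cov continuous_const (fun h => ?_) rfl ?_
    · rw [map_inv]
      exact (D.proj_mul_incl (inv_mem h.2) _).symm
    · simp only [← hz, hpb, n, Subgroup.coe_mul, Subgroup.coe_inv, hu]; group
  rw [← hu_inv, ← hz_inv, hc.apply_apply cov, hz]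
  congr 2; group

theorem apply_eq_self [ContinuousMul G] (hc : D.IsLiftedAction p c) (cov : IsCoveringMap p)
    {T : Set D.lower} (hT : IsPreconnected T) (hT_one : 1 ∈ T) {z : E}
    (hTz : ∀ m ∈ T, D.incl (p z) * m * (D.incl (p z))⁻¹ ∈ D.lower) {m : D.lower} (hm : m ∈ T) :
    c (z, m) = z := by
  have := hc.continuous
  have : PreconnectedSpace T := isPreconnected_iff_preconnectedSpace.1 hT
  refine (cov.const_of_comp (g := fun m : T => c (z, m)) (by fun_prop) (fun m m' => ?_)
    ⟨m, hm⟩ ⟨1, hT_one⟩).trans (hc.apply_one z)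
  have hpz (m : T) : p (c (z, m)) = p z := by
    rw [hc.map_apply, ← inv_mul_cancel_right (D.incl (p z) * _) (D.incl (p z)),
      D.proj_mul_incl (hTz m m.2)]
  simp only [hpz]

end IsLiftedAction

/-- Writing `F` for the lift of `proj` to `H`, the `ζ` with `F (u x) = ζ · l₂ x` lies over `z` for
every `x`, so it is constant. Evaluating `F` at `u y = (u x)⁻¹ = l₂ x⁻¹ * z⁻¹ * l₁ x⁻¹` gives
`ζ⁻¹ · (l₁ x)⁻¹ = ζ · l₂ y`, and `l₂ y * l₁ x` stabilizes `ζ`. -/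
theorem exists_mul_self_eq_one [IsTopologicalGroup G] [IsTopologicalGroup E]
    (cov : IsCoveringMap p) (hL : ContractsToOne D.lower) {H : Subgroup G} (hH : ContractsToOne H)
    {X : Type*} [TopologicalSpace X] [PreconnectedSpace X] {u : X → H} (hu : Continuous u)
    {l₁ l₂ : X → D.lower} (hl₂ : Continuous l₂) {z : K}
    (hfac : ∀ x, (u x : G) = l₁ x * D.incl z * l₂ x)
    {T : Set D.lower} (hT : IsPreconnected T) (hT_one : 1 ∈ T)
    (hTz : ∀ m ∈ T, D.incl z * m * (D.incl z)⁻¹ ∈ D.lower)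
    (hT_mem : ∀ m : D.lower, D.incl z * m * D.incl z ∈ D.lower → m ∈ T)
    {x y : X} (hxy : u y = (u x)⁻¹) : ∃ e : E, p e = z ∧ e * e = 1 := by
  obtain ⟨c, hc⟩ := D.exists_isLiftedAction cov hL
  obtain ⟨b, hb⟩ := D.exists_isLiftedAction cov hH
  have := hL.contractibleSpace
  have := hH.contractibleSpace
  have := hc.continuous
  have := hb.continuous
  let ζ (x : X) : E := c (b (1, u x), (l₂ x)⁻¹)
  have hpζ (x) : p (ζ x) = z := by
    simp only [ζ, hc.map_apply, hb.map_apply, D.proj_incl_proj_mul, map_one, one_mul, hfac,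
      Subgroup.coe_inv, mul_inv_cancel_right]
    exact D.proj_mul_incl (l₁ x).2 z
  have hζ_const : ζ x = ζ y :=
    cov.const_of_comp (g := ζ) (by fun_prop) (fun x y => by rw [hpζ, hpζ]) x y
  have hbζ (x) : b (1, u x) = c (ζ x, l₂ x) := by
    simp only [ζ, hc.apply_apply cov, inv_mul_cancel, hc.apply_one]
  have hinv : c ((ζ x)⁻¹, (l₁ x)⁻¹) = c (ζ x, l₂ y) := by
    rw [hζ_const, ← hbζ, hxy, ← hζ_const]
    exact (hb.apply_inv_of_eq_mul hc cov (by rw [hpζ, hfac]) (hbζ x)).symm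
  have hstab : l₂ y * l₁ x ∈ T := by
    have hone : (l₁ y * D.incl z * l₂ y) * (l₁ x * D.incl z * l₂ x) = 1 := by
      rw [← hfac, ← hfac, hxy, Subgroup.coe_inv, inv_mul_cancel]
    have hconj : D.incl z * (l₂ y * l₁ x : D.lower) * D.incl z = (l₁ y)⁻¹ * (l₂ x : G)⁻¹ := by
      refine eq_mul_inv_of_mul_eq (eq_inv_of_mul_eq_one_right ?_)
      simpa only [Subgroup.coe_mul, mul_assoc] using hone
    exact hT_mem _ (hconj ▸ mul_mem (inv_mem (l₁ y).2) (inv_mem (l₂ x).2))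
  refine ⟨ζ x, hpζ x, inv_eq_iff_mul_eq_one.1 ?_⟩
  calc (ζ x)⁻¹ = c (c ((ζ x)⁻¹, (l₁ x)⁻¹), l₁ x) := by
        rw [hc.apply_apply cov, inv_mul_cancel, hc.apply_one]
    _ = c (ζ x, l₂ y * l₁ x) := by rw [hinv, hc.apply_apply cov]
    _ = ζ x := hc.apply_eq_self cov hT hT_one (by simpa only [hpζ] using hTz) hstab

end IwasawaDecomposition

end LiftedActions

section StarConvexUnits

variable {A : Type*} [Ring A] [TopologicalSpace A] [Module ℝ A]

theorem contractsToOne_of_starConvex [ContinuousAdd A] [ContinuousSMul ℝ A]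
    (hA : IsEmbedding (Units.val : Aˣ → A))
    {H : Subgroup Aˣ} (hH : StarConvex ℝ (1 : A) (Units.val '' (H : Set Aˣ))) :
    ContractsToOne H := by
  have hmem (x : unitInterval × H) :
      ∃ y : H, ((y : Aˣ) : A) = (1 - (x.1 : ℝ)) • (1 : A) + (x.1 : ℝ) • ((x.2 : Aˣ) : A) := by
    obtain ⟨y, hy, hxy⟩ := hH ⟨x.2, x.2.2, rfl⟩ (sub_nonneg.2 x.1.2.2) x.1.2.1
      (sub_add_cancel 1 (x.1 : ℝ))
    exact ⟨⟨y, hy⟩, hxy⟩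
  choose F hF using hmem
  have hval : IsEmbedding fun y : H => ((y : Aˣ) : A) := hA.comp .subtypeVal
  refine ⟨⟨⟨⟨F, ?_⟩, fun x => ?_, fun x => ?_⟩, ?_⟩⟩
  · refine hval.continuous_iff.2 ?_
    have := hval.continuous
    simp only [Function.comp_def, hF]
    fun_prop
  · exact hval.injective (by simp [hF])
  · exact hval.injective (by simp [hF])
  · rintro t _ rfl
    exact hval.injective (by simp [hF, ← add_smul])

end StarConvexUnits

section Triangular

variable {n α R : Type*} [Fintype n] [LinearOrder α]

theorem mul_apply_self_of_blockTriangular [NonUnitalNonAssocSemiring R] {b : n → α}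
    (hb : Function.Injective b) {M N : Matrix n n R} (hM : M.BlockTriangular b)
    (hN : N.BlockTriangular b) (i : n) : (M * N) i i = M i i * N i i := by
  rw [mul_apply]
  refine Fintype.sum_eq_single i fun k hk => ?_
  rcases lt_or_gt_of_ne (hb.ne hk) with hlt | hlt
  · rw [hM hlt, zero_mul]
  · rw [hN hlt, mul_zero]

variable [DecidableEq n]

theorem det_of_blockTriangular_injective [CommRing R] {b : n → α} (hb : Function.Injective b)
    {M : Matrix n n R} (hM : M.BlockTriangular b) : M.det = ∏ i, M i i :=
  let := LinearOrder.lift' b hb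
  det_of_isUpperTriangular (M := M) fun _ _ h => hM h

/-- The group of matrices that are triangular with respect to the order of the indices given by
`b`, with diagonal entries in `S`. -/
def triangularGroup [Field R] (b : n ↪ α) (S : Subgroup Rˣ) : Subgroup (GL n R) where
  carrier := {g | (g : Matrix n n R).BlockTriangular b ∧
    ∀ i, (g : Matrix n n R) i i ∈ Units.val '' (S : Set Rˣ)}
  one_mem' := ⟨blockTriangular_one, fun i => ⟨1, S.one_mem, by simp⟩⟩
  mul_mem' {g h} hg hh := by
    refine ⟨hg.1.mul hh.1, fun i => ?_⟩
    obtain ⟨x, hx, hgx⟩ := hg.2 i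
    obtain ⟨y, hy, hhy⟩ := hh.2 i
    exact ⟨x * y, S.mul_mem hx hy, by
      rw [Units.val_mul, Units.val_mul, mul_apply_self_of_blockTriangular b.injective hg.1 hh.1,
        hgx, hhy]⟩
  inv_mem' {g} hg := by
    let := g.invertible
    have hinv : ((g⁻¹ : GL n R) : Matrix n n R).BlockTriangular b := by
      rw [coe_units_inv]
      exact blockTriangular_inv_of_blockTriangular hg.1
    refine ⟨hinv, fun i => ?_⟩
    obtain ⟨x, hx, hgx⟩ := hg.2 i
    refine ⟨x⁻¹, S.inv_mem hx, ?_⟩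
    have hmul := mul_apply_self_of_blockTriangular b.injective hg.1 hinv i
    rw [← Units.val_mul, mul_inv_cancel, Units.val_one, one_apply_eq, ← hgx] at hmul
    rw [Units.val_inv_eq_inv_val, eq_comm]
    exact eq_inv_of_mul_eq_one_right hmul.symm

theorem mem_val_image_triangularGroup_iff [Field R] {b : n ↪ α} {S : Subgroup Rˣ}
    {M : Matrix n n R} : M ∈ Units.val '' (triangularGroup b S : Set (GL n R)) ↔
      M.BlockTriangular b ∧ ∀ i, M i i ∈ Units.val '' (S : Set Rˣ) := by
  refine ⟨?_, fun hM => ?_⟩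
  · rintro ⟨g, hg, rfl⟩
    exact hg
  · have hdet : M.det ≠ 0 := by
      rw [det_of_blockTriangular_injective b.injective hM.1]
      refine Finset.prod_ne_zero_iff.2 fun i _ => ?_
      obtain ⟨x, -, hx⟩ := hM.2 i
      exact hx ▸ x.ne_zero
    exact ⟨GeneralLinearGroup.mkOfDetNeZero M hdet, hM, rfl⟩

theorem isEmbedding_val_generalLinearGroup [Field R] [TopologicalSpace R]
    [IsTopologicalDivisionRing R] : IsEmbedding (Units.val : GL n R → Matrix n n R) :=
  Units.isEmbedding_val_mk' (f := Inv.inv)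
    (fun M hM => (continuousAt_matrix_inv M (by
      rw [Ring.inverse_eq_inv']
      exact continuousAt_inv₀ ((isUnit_iff_isUnit_det M).1 hM).ne_zero)).continuousWithinAt)
    fun g => (coe_units_inv g).symm

theorem contractsToOne_triangularGroup (b : n ↪ α) {S : Subgroup ℝˣ}
    (hS : StarConvex ℝ (1 : ℝ) (Units.val '' (S : Set ℝˣ))) :
    ContractsToOne (triangularGroup b S) := by
  refine contractsToOne_of_starConvex isEmbedding_val_generalLinearGroup
    fun M hM s t hs ht hst => ?_
  rw [mem_val_image_triangularGroup_iff] at hM ⊢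
  refine ⟨fun i j hij => ?_, fun i => ?_⟩
  · simp [hM.1 hij, blockTriangular_one hij]
  · simpa using hS (hM.2 i) hs ht hst

variable (n) [LinearOrder n]

/-- The group of lower triangular matrices with positive diagonal. -/
noncomputable def lowerPosGroup : Subgroup (GL n ℝ) :=
  triangularGroup OrderDual.toDual.toEmbedding (Units.posSubgroup ℝ)

/-- The group of upper triangular matrices with diagonal entries `1`. -/
noncomputable def upperUnipotentGroup : Subgroup (GL n ℝ) :=
  triangularGroup (Function.Embedding.refl n) ⊥

variable {n}

theorem val_image_posSubgroup : Units.val '' (Units.posSubgroup ℝ : Set ℝˣ) = Set.Ioi 0 := by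
  ext x
  refine ⟨?_, fun hx => ⟨Units.mk0 x (ne_of_gt hx), hx, rfl⟩⟩
  rintro ⟨y, hy, rfl⟩
  exact hy

theorem mem_val_image_lowerPosGroup_iff {M : Matrix n n ℝ} :
    M ∈ Units.val '' (lowerPosGroup n : Set (GL n ℝ)) ↔ M.IsLowerTriangular ∧ ∀ i, 0 < M i i := by
  rw [lowerPosGroup, mem_val_image_triangularGroup_iff, val_image_posSubgroup]
  rfl

theorem mem_lowerPosGroup_iff {g : GL n ℝ} : g ∈ lowerPosGroup n ↔
    (g : Matrix n n ℝ).IsLowerTriangular ∧ ∀ i, 0 < (g : Matrix n n ℝ) i i := by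
  rw [← mem_val_image_lowerPosGroup_iff, Units.val_injective.mem_set_image, SetLike.mem_coe]

theorem det_lowerPosGroup_pos (m : lowerPosGroup n) : 0 < (m : GL n ℝ).1.det := by
  have hm := mem_lowerPosGroup_iff.1 m.2
  rw [det_of_isLowerTriangular _ hm.1]
  exact Finset.prod_pos fun i _ => hm.2 i

theorem mem_upperUnipotentGroup_iff {g : GL n ℝ} : g ∈ upperUnipotentGroup n ↔
    (g : Matrix n n ℝ).IsUpperTriangular ∧ ∀ i, (g : Matrix n n ℝ) i i = 1 := by
  rw [upperUnipotentGroup, ← SetLike.mem_coe, ← Units.val_injective.mem_set_image,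
    mem_val_image_triangularGroup_iff]
  simp [IsUpperTriangular, Function.Embedding.coe_refl, eq_comm]

theorem contractsToOne_lowerPosGroup : ContractsToOne (lowerPosGroup n) :=
  contractsToOne_triangularGroup _
    (val_image_posSubgroup ▸ (convex_Ioi 0).starConvex (Set.mem_Ioi.2 one_pos))

theorem contractsToOne_upperUnipotentGroup : ContractsToOne (upperUnipotentGroup n) :=
  contractsToOne_triangularGroup _ (by simpa using starConvex_singleton (𝕜 := ℝ) (1 : ℝ))

theorem isPreconnected_isDiag_lowerPosGroup :
    IsPreconnected {m : lowerPosGroup n | ((m : GL n ℝ) : Matrix n n ℝ).IsDiag} := by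
  have himage : (fun m : lowerPosGroup n => ((m : GL n ℝ) : Matrix n n ℝ)) ''
      {m | ((m : GL n ℝ) : Matrix n n ℝ).IsDiag} =
        diagonal '' Set.univ.pi fun _ => Set.Ioi (0 : ℝ) := by
    ext M
    constructor
    · rintro ⟨m, hm, rfl⟩
      exact ⟨diag (m : GL n ℝ), fun i _ => (mem_lowerPosGroup_iff.1 m.2).2 i, hm.diagonal_diag⟩
    · rintro ⟨x, hx, rfl⟩
      obtain ⟨m, hm, hmx⟩ := mem_val_image_lowerPosGroup_iff.2
        ⟨blockTriangular_diagonal x, fun i => by simpa using hx i trivial⟩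
      exact ⟨⟨m, hm⟩, by simp [hmx], hmx⟩
  have hval : IsEmbedding fun m : lowerPosGroup n => ((m : GL n ℝ) : Matrix n n ℝ) :=
    isEmbedding_val_generalLinearGroup.comp .subtypeVal
  rw [← hval.isInducing.isPreconnected_image, himage]
  exact (isPreconnected_univ_pi fun _ => isPreconnected_Ioi).image _ (by fun_prop)

end Triangular

section Elimination

variable {n R : Type*} [Fintype n] [LinearOrder n]

/-- The block of a matrix consisting of the rows and columns with index at most `k`. -/
def leadingBlock (A : Matrix n n R) (k : n) : Matrix {i // i ≤ k} {i // i ≤ k} R :=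
  A.submatrix (↑) (↑)

/-- The lower triangular matrix `N` of Gaussian elimination: if the leading blocks of `A` are
invertible, `N * A` is upper triangular with diagonal entries `1`. Row `k` of `N` is the last row
of the inverse of the `k`-th leading block. -/
noncomputable def eliminationMatrix [CommRing R] (A : Matrix n n R) : Matrix n n R :=
  of fun k j => if h : j ≤ k then (leadingBlock A k)⁻¹ ⟨k, le_rfl⟩ ⟨j, h⟩ else 0

section CommRing

variable [CommRing R] {A : Matrix n n R}

theorem isLowerTriangular_eliminationMatrix (A : Matrix n n R) :
    (eliminationMatrix A).IsLowerTriangular :=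
  fun _ _ h => dif_neg (not_le_of_gt h)

theorem eliminationMatrix_apply_self (A : Matrix n n R) (k : n) :
    eliminationMatrix A k k = (leadingBlock A k)⁻¹ ⟨k, le_rfl⟩ ⟨k, le_rfl⟩ :=
  dif_pos le_rfl

theorem eliminationMatrix_mul_apply_of_le {k j : n} (hA : IsUnit (leadingBlock A k).det)
    (hjk : j ≤ k) : (eliminationMatrix A * A) k j = (1 : Matrix n n R) k j := by
  have hzero (i : {i // ¬ i ≤ k}) : eliminationMatrix A k i * A i j = 0 := by
    rw [isLowerTriangular_eliminationMatrix A (not_le.1 i.2), zero_mul]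
  have hblock (i : {i // i ≤ k}) : eliminationMatrix A k i * A i j =
      (leadingBlock A k)⁻¹ ⟨k, le_rfl⟩ i * leadingBlock A k i ⟨j, hjk⟩ := by
    rw [eliminationMatrix, of_apply, dif_pos i.2]
    rfl
  rw [mul_apply, ← Fintype.sum_subtype_add_sum_subtype (· ≤ k), Fintype.sum_eq_zero _ hzero,
    add_zero, Fintype.sum_congr _ _ hblock, ← mul_apply, nonsing_inv_mul _ hA]
  simp only [one_apply, Subtype.mk.injEq]

theorem isUpperTriangular_eliminationMatrix_mul (hA : ∀ k, IsUnit (leadingBlock A k).det) :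
    (eliminationMatrix A * A).IsUpperTriangular := fun k j (hjk : j < k) => by
  rw [eliminationMatrix_mul_apply_of_le (hA k) hjk.le, one_apply_ne hjk.ne']

theorem eliminationMatrix_mul_apply_self (hA : ∀ k, IsUnit (leadingBlock A k).det) (k : n) :
    (eliminationMatrix A * A) k k = 1 := by
  rw [eliminationMatrix_mul_apply_of_le (hA k) le_rfl, one_apply_eq]

theorem isUnit_eliminationMatrix_apply_self (hA : ∀ k, IsUnit (leadingBlock A k).det) (k : n) :
    IsUnit (eliminationMatrix A k k) := by
  have hdet : (eliminationMatrix A).det * A.det = 1 := by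
    rw [← det_mul, det_of_isUpperTriangular (isUpperTriangular_eliminationMatrix_mul hA)]
    exact Finset.prod_eq_one fun k _ => eliminationMatrix_mul_apply_self hA k
  rw [det_of_isLowerTriangular _ (isLowerTriangular_eliminationMatrix A)] at hdet
  exact isUnit_of_dvd_unit
    (Finset.dvd_prod_of_mem (fun i => eliminationMatrix A i i) (Finset.mem_univ k))
    (.of_mul_eq_one _ hdet)

end CommRing

theorem continuous_eliminationMatrix [Field R] [TopologicalSpace R] [IsTopologicalDivisionRing R]
    {X : Type*} [TopologicalSpace X] {f : X → Matrix n n R} (hf : Continuous f)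
    (h : ∀ x k, IsUnit (leadingBlock (f x) k).det) :
    Continuous fun x => eliminationMatrix (f x) := by
  have hinv (k : n) : Continuous fun x => (leadingBlock (f x) k)⁻¹ := by
    refine continuous_iff_continuousAt.2 fun x => (continuousAt_matrix_inv _ ?_).comp
      (hf.matrix_submatrix _ _).continuousAt
    rw [Ring.inverse_eq_inv']
    exact continuousAt_inv₀ (h x k).ne_zero
  refine continuous_matrix fun k j => ?_
  simp only [eliminationMatrix, of_apply]
  split_ifs with hjk
  · exact (hinv k).matrix_elem _ _
  · exact continuous_const

end Elimination

section GramSchmidt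

variable {n : Type*} [Fintype n] [LinearOrder n]

theorem posDef_mul_transpose (g : GL n ℝ) : ((g : Matrix n n ℝ) * (g : Matrix n n ℝ)ᵀ).PosDef := by
  simpa using PosDef.mul_conjTranspose_self (g : Matrix n n ℝ)
    (vecMul_injective_of_isUnit g.isUnit)

theorem posDef_leadingBlock {ι : Type*} [LinearOrder ι] {A : Matrix ι ι ℝ} (hA : A.PosDef)
    (k : ι) : (leadingBlock A k).PosDef :=
  hA.submatrix Subtype.val_injective

theorem isUnit_det_leadingBlock_of_posDef {A : Matrix n n ℝ} (hA : A.PosDef) (k : n) :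
    IsUnit (leadingBlock A k).det :=
  (posDef_leadingBlock hA k).det_pos.ne'.isUnit

theorem eliminationMatrix_apply_self_pos {A : Matrix n n ℝ} (hA : A.PosDef) (k : n) :
    0 < eliminationMatrix A k k := by
  rw [eliminationMatrix_apply_self]
  exact (posDef_leadingBlock hA k).inv.diag_pos

/-- The symmetric matrix `N * A * Nᵀ` is a product of upper triangular matrices. -/
theorem eliminationMatrix_mul_mul_transpose {A : Matrix n n ℝ} (hA : A.PosDef) :
    eliminationMatrix A * A * (eliminationMatrix A)ᵀ =
      diagonal fun k => eliminationMatrix A k k := by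
  have hunit := isUnit_det_leadingBlock_of_posDef hA
  have hNA := isUpperTriangular_eliminationMatrix_mul hunit
  have hN : (eliminationMatrix A)ᵀ.IsUpperTriangular :=
    (isLowerTriangular_eliminationMatrix A).transpose
  have hupper := hNA.mul hN
  have hsymm : (eliminationMatrix A * A * (eliminationMatrix A)ᵀ).IsSymm := by
    rw [IsSymm, transpose_mul, transpose_mul, transpose_transpose,
      (isHermitian_iff_isSymm.1 hA.isHermitian).eq, Matrix.mul_assoc]
  ext i j
  rcases lt_trichotomy i j with hij | rfl | hij
  · rw [diagonal_apply_ne _ hij.ne, ← hsymm.apply, hupper hij]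
  · rw [diagonal_apply_eq, mul_apply_self_of_blockTriangular Function.injective_id hNA hN,
      eliminationMatrix_mul_apply_self hunit, one_mul, transpose_apply]
  · rw [diagonal_apply_ne _ hij.ne', hupper hij]

/-- The lower triangular matrix `L` of the Gram–Schmidt process on the rows of `g`: the matrix
`L * g` is orthogonal. -/
noncomputable def gramSchmidtMatrix (g : GL n ℝ) : Matrix n n ℝ :=
  let N := eliminationMatrix ((g : Matrix n n ℝ) * (g : Matrix n n ℝ)ᵀ)
  diagonal (fun k => (√(N k k))⁻¹) * N

theorem gramSchmidtMatrix_mem (g : GL n ℝ) :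
    gramSchmidtMatrix g ∈ Units.val '' (lowerPosGroup n : Set (GL n ℝ)) := by
  refine mem_val_image_lowerPosGroup_iff.2
    ⟨(blockTriangular_diagonal _).mul (isLowerTriangular_eliminationMatrix _), fun k => ?_⟩
  have hpos := eliminationMatrix_apply_self_pos (posDef_mul_transpose g) k
  rw [gramSchmidtMatrix, diagonal_mul]
  positivity

theorem gramSchmidtMatrix_mul_mem_orthogonalGroup (g : GL n ℝ) :
    gramSchmidtMatrix g * (g : Matrix n n ℝ) ∈ orthogonalGroup n ℝ := by
  have hA := posDef_mul_transpose g
  have hN := eliminationMatrix_mul_mul_transpose hA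
  set N := eliminationMatrix ((g : Matrix n n ℝ) * (g : Matrix n n ℝ)ᵀ) with hN_def
  have hsqrt (k : n) : (√(N k k))⁻¹ * N k k * (√(N k k))⁻¹ = 1 := by
    have hpos : 0 < N k k := eliminationMatrix_apply_self_pos hA k
    have hne := (Real.sqrt_pos.2 hpos).ne'
    nth_rw 2 [← Real.mul_self_sqrt hpos.le]
    field_simp
  rw [mem_orthogonalGroup_iff]
  calc _ = diagonal (fun k => (√(N k k))⁻¹) *
          (N * ((g : Matrix n n ℝ) * (g : Matrix n n ℝ)ᵀ) * Nᵀ) *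
          diagonal (fun k => (√(N k k))⁻¹) := by
        simp only [gramSchmidtMatrix, ← hN_def, transpose_mul, diagonal_transpose, Matrix.mul_assoc]
    _ = 1 := by
        rw [hN, diagonal_mul_diagonal, diagonal_mul_diagonal, ← diagonal_one]
        exact congrArg diagonal (funext hsqrt)

theorem continuous_gramSchmidtMatrix : Continuous (gramSchmidtMatrix (n := n)) := by
  have : Continuous fun g : GL n ℝ => (g : Matrix n n ℝ) := Units.continuous_val
  have hN : Continuous fun g : GL n ℝ =>
      eliminationMatrix ((g : Matrix n n ℝ) * (g : Matrix n n ℝ)ᵀ) :=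
    continuous_eliminationMatrix (by fun_prop)
      fun g => isUnit_det_leadingBlock_of_posDef (posDef_mul_transpose g)
  have hsqrt (k : n) : Continuous fun g : GL n ℝ =>
      (√(eliminationMatrix ((g : Matrix n n ℝ) * (g : Matrix n n ℝ)ᵀ) k k))⁻¹ :=
    (hN.matrix_elem k k).sqrt.inv₀ fun g =>
      (Real.sqrt_pos.2 (eliminationMatrix_apply_self_pos (posDef_mul_transpose g) k)).ne'
  exact (continuous_pi hsqrt).matrix_diagonal.matrix_mul hN

theorem eq_one_of_mem_orthogonalGroup_of_mem_lowerPosGroup {M : Matrix n n ℝ}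
    (hM : M ∈ orthogonalGroup n ℝ) (hM' : M ∈ Units.val '' (lowerPosGroup n : Set (GL n ℝ))) :
    M = 1 := by
  obtain ⟨g, hg, rfl⟩ := hM'
  have htranspose : ((g⁻¹ : GL n ℝ) : Matrix n n ℝ) = (g : Matrix n n ℝ)ᵀ := by
    rw [coe_units_inv]
    exact inv_eq_right_inv ((mem_orthogonalGroup_iff n ℝ).1 hM)
  have hlower := (mem_lowerPosGroup_iff.1 hg).1
  have hlower' := (mem_lowerPosGroup_iff.1 (inv_mem hg)).1
  ext i j
  rcases lt_trichotomy i j with hij | rfl | hij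
  · rw [hlower hij, one_apply_ne hij.ne]
  · have hsq := mul_apply_self_of_blockTriangular OrderDual.toDual.injective hlower hlower' i
    rw [← Units.val_mul, mul_inv_cancel, Units.val_one, htranspose, transpose_apply] at hsq
    rw [one_apply_eq] at hsq ⊢
    exact (mul_self_eq_one_iff.1 hsq.symm).resolve_right
      (by linarith [(mem_lowerPosGroup_iff.1 hg).2 i])
  · rw [← transpose_apply (g : Matrix n n ℝ), ← htranspose, hlower' hij, one_apply_ne hij.ne']

variable (n)

/-- The inclusion of the orthogonal group into the general linear group. -/
def orthogonalIncl : orthogonalGroup n ℝ →ₜ* GL n ℝ where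
  toMonoidHom := Unitary.toUnits
  continuous_toFun := isEmbedding_val_generalLinearGroup.continuous_iff.2 continuous_subtype_val

/-- The Iwasawa decomposition of `GL n ℝ`, given by the Gram–Schmidt process. -/
noncomputable def realIwasawaDecomposition :
    IwasawaDecomposition (GL n ℝ) (orthogonalGroup n ℝ) where
  incl := orthogonalIncl n
  lower := lowerPosGroup n
  proj := ⟨fun g => ⟨_, gramSchmidtMatrix_mul_mem_orthogonalGroup g⟩,
    (continuous_gramSchmidtMatrix.matrix_mul Units.continuous_val).subtype_mk _⟩
  mul_inv_mem g := by
    obtain ⟨l, hl, hlg⟩ := gramSchmidtMatrix_mem g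
    convert inv_mem hl
    rw [mul_inv_eq_iff_eq_mul, eq_inv_mul_iff_mul_eq]
    exact Units.ext (congrArg (· * (g : Matrix n n ℝ)) hlg)
  eq_one_of_incl_mem {k} hk :=
    Subtype.ext (eq_one_of_mem_orthogonalGroup_of_mem_lowerPosGroup k.2 ⟨_, hk, rfl⟩)

end GramSchmidt

section Bruhat

variable {d : ℕ}

/-- The antidiagonal matrix whose entry in row `i` is `ε i`. -/
def antidiagonal {R : Type*} [Zero R] (ε : Fin d → R) : Matrix (Fin d) (Fin d) R :=
  (diagonal ε).submatrix id Fin.rev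

theorem antidiagonal_mul_apply {R : Type*} [NonUnitalNonAssocSemiring R] (ε : Fin d → R)
    (M : Matrix (Fin d) (Fin d) R) (i j : Fin d) :
    (antidiagonal ε * M) i j = ε i * M i.rev j := by
  rw [mul_apply, Fintype.sum_eq_single i.rev]
  · simp [antidiagonal]
  · intro k hk
    have hik : i ≠ k.rev := fun h => hk (by rw [h, Fin.rev_rev])
    simp [antidiagonal, hik]

theorem mul_antidiagonal_apply {R : Type*} [NonUnitalNonAssocSemiring R] (ε : Fin d → R)
    (M : Matrix (Fin d) (Fin d) R) (i j : Fin d) :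
    (M * antidiagonal ε) i j = M i j.rev * ε j.rev := by
  simp only [antidiagonal, mul_apply, submatrix_apply, id_eq]
  rw [← mul_apply, mul_diagonal]

theorem exists_sign_of_preconnectedSpace {X : Type*} [TopologicalSpace X] [PreconnectedSpace X]
    {f : X → ℝ} (hf : Continuous f) (hne : ∀ x, f x ≠ 0) :
    ∃ ε : ℝ, ε * ε = 1 ∧ ∀ x, 0 < ε * f x := by
  have hrange := (isPreconnected_range hf).ordConnected
  by_cases hpos : ∀ x, 0 < f x
  · exact ⟨1, one_mul 1, by simpa using hpos⟩
  · obtain ⟨x, hx⟩ := not_forall.1 hpos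
    refine ⟨-1, by norm_num, fun y => ?_⟩
    have : f y < 0 := by
      by_contra! hy
      obtain ⟨w, hw⟩ := hrange.out ⟨x, rfl⟩ ⟨y, rfl⟩ ⟨not_lt.1 hx, hy⟩
      exact hne w hw
    linarith

/-- With `w₀` the reversal of the indices and `N` the elimination matrix of `u * w₀`, the factors
are `(diagonal ε * N)⁻¹` and `w₀ * (N * u * w₀) * w₀`. -/
theorem exists_eq_mul_antidiagonal_mul {X : Type*} [TopologicalSpace X] [PreconnectedSpace X]
    {u : X → Matrix (Fin d) (Fin d) ℝ} (hu : Continuous u)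
    (hlead : ∀ x k, IsUnit (leadingBlock ((u x).submatrix id Fin.rev) k).det) :
    ∃ (ε : Fin d → ℝ) (l₁ l₂ : X → lowerPosGroup (Fin d)), (∀ i, ε i * ε i = 1) ∧ Continuous l₂ ∧
      ∀ x, u x = (l₁ x : GL (Fin d) ℝ).1 * antidiagonal ε * (l₂ x : GL (Fin d) ℝ).1 := by
  let N (x : X) := eliminationMatrix ((u x).submatrix id Fin.rev)
  let l (x : X) := (N x * (u x).submatrix id Fin.rev).submatrix Fin.rev Fin.rev
  have hN : Continuous N := continuous_eliminationMatrix (hu.matrix_submatrix _ _) hlead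
  choose ε hε hεN using fun i => exists_sign_of_preconnectedSpace (hN.matrix_elem i i)
    fun x => (isUnit_eliminationMatrix_apply_self (hlead x) i).ne_zero
  have hl_mem (x : X) : l x ∈ Units.val '' (lowerPosGroup (Fin d) : Set (GL (Fin d) ℝ)) :=
    mem_val_image_lowerPosGroup_iff.2 ⟨fun i j hij =>
      isUpperTriangular_eliminationMatrix_mul (hlead x) (Fin.rev_lt_rev.2 hij), fun i =>
        one_pos.trans_eq (eliminationMatrix_mul_apply_self (hlead x) i.rev).symm⟩
  have hεN_mem (x : X) :
      diagonal ε * N x ∈ Units.val '' (lowerPosGroup (Fin d) : Set (GL (Fin d) ℝ)) :=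
    mem_val_image_lowerPosGroup_iff.2
      ⟨(blockTriangular_diagonal ε).mul (isLowerTriangular_eliminationMatrix _), fun i => by
        rw [diagonal_mul]; exact hεN i x⟩
  choose l₂ hl₂_mem hl₂ using hl_mem
  choose m hm_mem hm using hεN_mem
  refine ⟨ε, fun x => ⟨(m x)⁻¹, inv_mem (hm_mem x)⟩, fun x => ⟨l₂ x, hl₂_mem x⟩, hε, ?_,
    fun x => ?_⟩
  · refine Continuous.subtype_mk (isEmbedding_val_generalLinearGroup.continuous_iff.2 ?_) _
    simp only [Function.comp_def, hl₂, l]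
    fun_prop
  · have hmul : antidiagonal ε * l x = diagonal ε * N x * u x := by
      ext i j
      rw [antidiagonal_mul_apply, Matrix.mul_assoc, diagonal_mul]
      simp [l, mul_apply]
    rw [hl₂, Matrix.mul_assoc, hmul, ← hm, ← Matrix.mul_assoc, ← Units.val_mul, inv_mul_cancel,
      Units.val_one, Matrix.one_mul]

theorem antidiagonal_mul_diagonal_mul_transpose {R : Type*} [Semiring R] (ε w : Fin d → R) :
    antidiagonal ε * diagonal w * (antidiagonal ε)ᵀ = diagonal fun i => ε i * w i.rev * ε i := by
  ext i j
  rw [Matrix.mul_assoc, antidiagonal_mul_apply, diagonal_mul, transpose_apply, antidiagonal,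
    submatrix_apply]
  rcases eq_or_ne i j with rfl | hij
  · simp [mul_assoc]
  · simp [hij, hij.symm]

theorem antidiagonal_mem_orthogonalGroup {ε : Fin d → ℝ} (hε : ∀ i, ε i * ε i = 1) :
    antidiagonal ε ∈ orthogonalGroup (Fin d) ℝ := by
  have hmul := antidiagonal_mul_diagonal_mul_transpose ε 1
  simp only [diagonal_one', Pi.one_apply, mul_one, hε] at hmul
  exact (mem_orthogonalGroup_iff _ ℝ).2 (hmul.trans diagonal_one)

theorem isDiag_of_antidiagonal_mul_mul_antidiagonal {R : Type*} [Semiring R] [NoZeroDivisors R]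
    {ε : Fin d → R} (hε : ∀ i, ε i ≠ 0) {M : Matrix (Fin d) (Fin d) R} (hM : M.IsLowerTriangular)
    (hM' : (antidiagonal ε * M * antidiagonal ε).IsLowerTriangular) : M.IsDiag := by
  intro i j hij
  rcases lt_or_gt_of_ne hij with hlt | hlt
  · exact hM hlt
  · have := hM' (show OrderDual.toDual j.rev < OrderDual.toDual i.rev from Fin.rev_lt_rev.2 hlt)
    rw [mul_antidiagonal_apply, antidiagonal_mul_apply, Fin.rev_rev, Fin.rev_rev] at this
    simpa [hε] using this

theorem abs_trace_antidiagonal_le_one {ε : Fin d → ℝ} (hε : ∀ i, ε i * ε i = 1) :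
    |(antidiagonal ε).trace| ≤ 1 := by
  have hentry (i : Fin d) : antidiagonal ε i i = if i = i.rev then ε i else 0 := by
    simp [antidiagonal, diagonal_apply]
  by_cases h : ∃ i : Fin d, i = i.rev
  · obtain ⟨i, hi⟩ := h
    have htrace : (antidiagonal ε).trace = ε i := by
      rw [trace, Fintype.sum_eq_single i, diag_apply, hentry, if_pos hi]
      intro j hj
      rw [diag_apply, hentry, if_neg]
      simp only [Fin.ext_iff, Fin.val_rev] at hi hj ⊢
      omega
    have habs : |ε i| = |1| := abs_eq_abs.2 (mul_self_eq_one_iff.1 (hε i))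
    rw [htrace, habs, abs_one]
  · have htrace : (antidiagonal ε).trace = 0 := Finset.sum_eq_zero fun i _ => by
      rw [diag_apply, hentry, if_neg (not_exists.1 h i)]
    rw [htrace, abs_zero]
    exact zero_le_one

end Bruhat

section CornerMinors

variable {d : ℕ}

theorem det_leadingBlock_submatrix_rev (u : Matrix (Fin d) (Fin d) ℝ) (i : Fin d) :
    (leadingBlock (u.submatrix id Fin.rev) i).det =
      Equiv.Perm.sign (Fin.revPerm : Equiv.Perm (Fin (i + 1))) * cornerMinor d (i + 1) u := by
  let e : Fin (i + 1) ≃ {j : Fin d // j ≤ i} :=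
    (Fin.castLEOrderIso i.2).toEquiv.trans (Equiv.subtypeEquivRight fun j => Nat.lt_succ_iff)
  rw [← det_submatrix_equiv_self e, cornerMinor, ← det_permute']
  congr 1
  ext a b
  have ha := a.2
  have hb := b.2
  rw [submatrix_apply _ id, of_apply, dif_pos (by rw [Fin.revPerm_apply, Fin.val_rev, id]; omega)]
  refine congrArg₂ u (Fin.ext rfl) (Fin.ext ?_)
  simp only [e, Fin.revPerm_apply, Fin.val_rev, Equiv.trans_apply,
    Equiv.subtypeEquivRight_apply_coe, RelIso.coe_fn_toEquiv, Fin.castLEOrderIso_apply,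
    Fin.val_castLE]
  omega

theorem cornerMinor_self (u : Matrix (Fin d) (Fin d) ℝ) : cornerMinor d d u = u.det :=
  congrArg det (Matrix.ext fun i j => by simp)

theorem IsUniUpper.det_eq_one_s1 {u : Matrix (Fin d) (Fin d) ℝ} (hu : IsUniUpper d u) : u.det = 1 := by
  rw [det_of_isUpperTriangular (M := u) fun i j => hu.1 i j]
  exact Finset.prod_eq_one fun i _ => hu.2 i

theorem isUnit_det_leadingBlock_of_mem_Sset {u : Matrix (Fin d) (Fin d) ℝ} (hu : u ∈ Sset d)
    (i : Fin d) : IsUnit (leadingBlock (u.submatrix id Fin.rev) i).det := by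
  rw [det_leadingBlock_submatrix_rev, isUnit_iff_ne_zero]
  refine mul_ne_zero (by exact_mod_cast (Equiv.Perm.sign _).ne_zero) ?_
  rcases (Nat.succ_le_of_lt i.2).lt_or_eq with h | h
  · exact hu.2 _ (Nat.le_add_left 1 i) (Nat.le_sub_one_of_lt h)
  · rw [← Nat.succ_eq_add_one, h, cornerMinor_self, hu.1.det_eq_one_s1]
    exact one_ne_zero

end CornerMinors

section Clifford

variable {n R : Type*} [DecidableEq n] [CommRing R]

/-- The Walsh function of `P`: the sign `(-1) ^ #(P ∩ x)`, a character in each argument of the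
group of finite sets under symmetric difference. -/
def walshSign (P x : Finset n) : R := ∏ j ∈ P, if j ∈ x then -1 else 1

theorem walshSign_symmDiff (P x y : Finset n) :
    (walshSign P (symmDiff x y) : R) = walshSign P x * walshSign P y := by
  simp only [walshSign, ← Finset.prod_mul_distrib]
  refine Finset.prod_congr rfl fun j _ => ?_
  by_cases hx : j ∈ x <;> by_cases hy : j ∈ y <;> simp [Finset.mem_symmDiff, hx, hy]

theorem walshSign_singleton (P : Finset n) (i : n) :
    (walshSign P {i} : R) = if i ∈ P then -1 else 1 := by
  simp only [walshSign, Finset.mem_singleton, Finset.prod_ite_eq']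

theorem walshSign_mul_self (P x : Finset n) : (walshSign P x * walshSign P x : R) = 1 := by
  rw [← walshSign_symmDiff, symmDiff_self]
  simp [walshSign]

/-- The operator on functions of finite sets that shifts by the symmetric difference with `{i}` and
multiplies by the Walsh function of `P`. -/
def signedFlip (P : Finset n) (i : n) : Matrix (Finset n) (Finset n) R :=
  of fun x y => if y = symmDiff x {i} then walshSign P x else 0

theorem signedFlip_transpose (P : Finset n) (i : n) :
    (signedFlip P i : Matrix _ _ R)ᵀ = (walshSign P {i} : R) • signedFlip P i := by
  ext x y
  have hiff : x = symmDiff y {i} ↔ y = symmDiff x {i} := by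
    constructor <;> rintro rfl <;> rw [symmDiff_symmDiff_cancel_right]
  rw [transpose_apply, Matrix.smul_apply, signedFlip, of_apply, of_apply, if_congr hiff rfl rfl]
  split_ifs with hy
  · rw [hy, walshSign_symmDiff, smul_eq_mul, mul_comm]
  · rw [smul_zero]

variable [Fintype n]

theorem signedFlip_mul_apply (P : Finset n) (i : n) (M : Matrix (Finset n) (Finset n) R)
    (x y : Finset n) :
    (signedFlip P i * M : Matrix _ _ R) x y = walshSign P x * M (symmDiff x {i}) y := by
  rw [mul_apply, Fintype.sum_eq_single (symmDiff x {i}) fun z hz => by simp [signedFlip, hz]]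
  simp [signedFlip]

theorem mul_signedFlip_apply (P : Finset n) (i : n) (M : Matrix (Finset n) (Finset n) R)
    (x y : Finset n) :
    (M * signedFlip P i : Matrix _ _ R) x y =
      M x (symmDiff y {i}) * walshSign P (symmDiff y {i}) := by
  have hflip : symmDiff (symmDiff y {i}) {i} = y := symmDiff_symmDiff_cancel_right _ _
  rw [mul_apply, Fintype.sum_eq_single (symmDiff y {i})]
  · simp [signedFlip, hflip]
  · rintro z hz
    have hyz : y ≠ symmDiff z {i} := by
      rintro rfl
      exact hz (symmDiff_symmDiff_cancel_right _ _).symm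
    simp [signedFlip, hyz]

theorem signedFlip_mul_comm (P Q : Finset n) (i j : n) :
    (signedFlip P i * signedFlip Q j : Matrix _ _ R) =
      (walshSign P {j} * walshSign Q {i} : R) • (signedFlip Q j * signedFlip P i) := by
  ext x y
  rw [Matrix.smul_apply, signedFlip_mul_apply, signedFlip_mul_apply, signedFlip, signedFlip,
    of_apply, of_apply, symmDiff_right_comm, walshSign_symmDiff, walshSign_symmDiff, smul_eq_mul]
  split_ifs
  · linear_combination -(walshSign Q {i} * walshSign P x * walshSign Q x : R) *
      walshSign_mul_self (R := R) P {j}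
  · ring

theorem signedFlip_mul_signedFlip_self (P Q : Finset n) (i : n) :
    (signedFlip P i * signedFlip Q i : Matrix _ _ R) =
      diagonal fun x => walshSign P x * (walshSign Q x * walshSign Q {i}) := by
  ext x y
  rw [signedFlip_mul_apply, signedFlip, of_apply, symmDiff_symmDiff_cancel_right,
    walshSign_symmDiff, diagonal_apply, mul_ite, mul_zero, if_congr eq_comm rfl rfl]

end Clifford

section JordanWigner

variable {n R : Type*} [Fintype n] [LinearOrder n] [CommRing R]

/-- The Jordan–Wigner matrix of left exterior multiplication by the `i`-th basis vector plus the
adjoint contraction, in the basis of the exterior algebra indexed by subsets of `n`. -/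
def positiveGenerator (i : n) : Matrix (Finset n) (Finset n) R := signedFlip {j | j < i} i

/-- The Jordan–Wigner matrix of the difference of the two operators in `positiveGenerator`. The
positive and negative generators together generate the full matrix algebra. -/
def negativeGenerator (i : n) : Matrix (Finset n) (Finset n) R := signedFlip {j | j ≤ i} i

theorem positiveGenerator_transpose (i : n) :
    (positiveGenerator i : Matrix _ _ R)ᵀ = positiveGenerator i := by
  simp [positiveGenerator, signedFlip_transpose, walshSign_singleton]

theorem positiveGenerator_mul_self (i : n) :
    (positiveGenerator i * positiveGenerator i : Matrix _ _ R) = 1 := by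
  simp [positiveGenerator, signedFlip_mul_signedFlip_self, walshSign_singleton,
    walshSign_mul_self]

theorem positiveGenerator_mul_of_ne {i j : n} (hij : i ≠ j) :
    (positiveGenerator i * positiveGenerator j : Matrix _ _ R) =
      -(positiveGenerator j * positiveGenerator i) := by
  rw [positiveGenerator, positiveGenerator, signedFlip_mul_comm]
  rcases hij.lt_or_gt with h | h <;> simp [walshSign_singleton, h, h.not_gt]

theorem positiveGenerator_mul_negativeGenerator (i j : n) :
    (positiveGenerator i * negativeGenerator j : Matrix _ _ R) =
      -(negativeGenerator j * positiveGenerator i) := by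
  rw [positiveGenerator, negativeGenerator, signedFlip_mul_comm]
  rcases lt_or_ge j i with h | h <;> simp [walshSign_singleton, h, not_le.2, not_lt.2]

theorem positiveGenerator_mul_negativeGenerator_self (i : n) :
    (positiveGenerator i * negativeGenerator i : Matrix _ _ R) =
      diagonal fun x => if i ∈ x then 1 else -1 := by
  have hinsert : ({j | j ≤ i} : Finset n) = insert i ({j | j < i} : Finset n) := by
    ext j
    simp [le_iff_eq_or_lt]
  rw [positiveGenerator, negativeGenerator, signedFlip_mul_signedFlip_self, walshSign_singleton,
    if_pos (by simp)]
  congr 1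
  ext x
  have hsq : (walshSign {j | j < i} x * walshSign {j | j < i} x : R) = 1 := walshSign_mul_self _ _
  have hle : (walshSign {j | j ≤ i} x : R) =
      (if i ∈ x then -1 else 1) * walshSign {j | j < i} x := by
    rw [hinsert, walshSign, Finset.prod_insert (by simp), walshSign]
  rw [hle]
  split_ifs
  · linear_combination hsq
  · linear_combination -hsq

theorem apply_eq_zero_of_commute [NoZeroDivisors R] [NeZero (2 : R)]
    {s : Matrix (Finset n) (Finset n) R} (hpos : ∀ i, Commute s (positiveGenerator i))
    (hneg : ∀ i, Commute s (negativeGenerator i)) {x y : Finset n} (hxy : x ≠ y) : s x y = 0 := by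
  obtain ⟨i, hi⟩ : ∃ i, ¬ (i ∈ x ↔ i ∈ y) := by
    by_contra! h
    exact hxy (Finset.ext h)
  have hcomm := congrFun₂ ((hpos i).mul_right (hneg i)).eq x y
  rw [positiveGenerator_mul_negativeGenerator_self, mul_diagonal, diagonal_mul] at hcomm
  have htwo : 2 * s x y = 0 := by
    by_cases hx : i ∈ x
    · rw [if_pos hx, if_neg (by tauto)] at hcomm
      linear_combination -hcomm
    · rw [if_neg hx, if_pos (by tauto)] at hcomm
      linear_combination hcomm
  exact (mul_eq_zero.1 htwo).resolve_left two_ne_zero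

theorem eq_smul_one_of_commute [NoZeroDivisors R] [NeZero (2 : R)]
    {s : Matrix (Finset n) (Finset n) R} (hpos : ∀ i, Commute s (positiveGenerator i))
    (hneg : ∀ i, Commute s (negativeGenerator i)) : s = s ∅ ∅ • (1 : Matrix _ _ R) := by
  have hflip (x : Finset n) (i : n) : s (symmDiff x {i}) (symmDiff x {i}) = s x x := by
    have hcomm := congrFun₂ (hpos i).eq x (symmDiff x {i})
    rw [positiveGenerator, mul_signedFlip_apply, signedFlip_mul_apply,
      symmDiff_symmDiff_cancel_right] at hcomm
    linear_combination -(walshSign {j | j < i} x : R) * hcomm +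
      (s x x - s (symmDiff x {i}) (symmDiff x {i})) * walshSign_mul_self (R := R) {j | j < i} x
  have hdiag (x : Finset n) : s x x = s ∅ ∅ := by
    induction x using Finset.induction_on with
    | empty => rfl
    | insert i x hi ih =>
      rw [← ih, ← hflip x i, (Finset.disjoint_singleton_right.2 hi).symmDiff_eq_sup,
        Finset.sup_eq_union, Finset.union_comm, Finset.singleton_union]
  ext x y
  rcases eq_or_ne x y with rfl | hxy
  · simp [hdiag]
  · simp [apply_eq_zero_of_commute hpos hneg hxy, hxy]

/-- Clifford multiplication by a vector on the exterior algebra. -/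
def cliffordMap : (n → R) →ₗ[R] Matrix (Finset n) (Finset n) R :=
  Fintype.linearCombination R positiveGenerator

theorem cliffordMap_apply (v : n → R) : cliffordMap v = ∑ i, v i • positiveGenerator i := rfl

theorem cliffordMap_single (i : n) :
    cliffordMap (Pi.single i 1) = (positiveGenerator i : Matrix _ _ R) := by
  rw [cliffordMap, Fintype.linearCombination_apply_single, one_smul]

theorem cliffordMap_transpose (v : n → R) : (cliffordMap v)ᵀ = cliffordMap v := by
  simp only [cliffordMap_apply, transpose_sum, transpose_smul, positiveGenerator_transpose]

theorem cliffordMap_mul_negativeGenerator (v : n → R) (i : n) :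
    cliffordMap v * negativeGenerator i = -(negativeGenerator i * cliffordMap v) := by
  simp only [cliffordMap_apply, Finset.sum_mul, Finset.mul_sum, smul_mul_assoc, mul_smul_comm,
    positiveGenerator_mul_negativeGenerator, smul_neg, Finset.sum_neg_distrib]

theorem cliffordMap_mul_add (v w : n → R) :
    cliffordMap v * cliffordMap w + cliffordMap w * cliffordMap v =
      (2 * (v ⬝ᵥ w)) • (1 : Matrix _ _ R) := by
  have hanti (i j : n) : positiveGenerator i * positiveGenerator j +
      positiveGenerator j * positiveGenerator i =
        if i = j then (2 : R) • (1 : Matrix _ _ R) else 0 := by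
    split_ifs with hij
    · rw [hij, positiveGenerator_mul_self, two_smul]
    · rw [positiveGenerator_mul_of_ne hij, neg_add_cancel]
  calc cliffordMap v * cliffordMap w + cliffordMap w * cliffordMap v
      = ∑ i, ∑ j, (v i * w j) • (positiveGenerator i * positiveGenerator j +
          positiveGenerator j * positiveGenerator i) := by
        simp only [cliffordMap_apply, Finset.sum_mul_sum, smul_mul_smul_comm, smul_add,
          Finset.sum_add_distrib]
        rw [Finset.sum_comm (f := fun i j => (w i * v j) • _)]
        simp only [mul_comm (w _)]
    _ = _ := by
        simp only [hanti, smul_ite, smul_zero, Finset.sum_ite_eq, Finset.mem_univ, if_true,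
          smul_smul, ← Finset.sum_smul, dotProduct, Finset.sum_mul, mul_comm (2 : R)]

theorem cliffordMap_mul_self [NoZeroDivisors R] [NeZero (2 : R)] (v : n → R) :
    cliffordMap v * cliffordMap v = (v ⬝ᵥ v) • (1 : Matrix _ _ R) := by
  have htwo : (2 : R) • (cliffordMap v * cliffordMap v) = (2 : R) • (v ⬝ᵥ v) • 1 := by
    rw [two_smul, cliffordMap_mul_add, mul_smul]
  ext x y
  exact mul_left_cancel₀ two_ne_zero (congrFun₂ htwo x y)

end JordanWigner

section OrthogonalGroup

variable {n : Type*} [Fintype n] [DecidableEq n]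

theorem det_mul_self_of_mem_orthogonalGroup {R : Type*} [CommRing R] (g : orthogonalGroup n R) :
    g.1.det * g.1.det = 1 := by
  simpa using congrArg det ((mem_orthogonalGroup_iff n R).1 g.2)

instance orthogonalGroup_compactSpace : CompactSpace (orthogonalGroup n ℝ) := by
  have hbox : IsCompact (Set.univ.pi fun _ : n => Set.univ.pi fun _ : n => Set.Icc (-1 : ℝ) 1) :=
    isCompact_univ_pi fun _ => isCompact_univ_pi fun _ => isCompact_Icc
  have hclosed : IsClosed {A : Matrix n n ℝ | A * Aᵀ = 1} :=
    isClosed_eq (by fun_prop) continuous_const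
  simp only [← mem_orthogonalGroup_iff] at hclosed
  refine isCompact_iff_compactSpace.1 (hbox.of_isClosed_subset hclosed fun A hA i _ j _ => ?_)
  exact abs_le.1 (entry_norm_bound_of_unitary hA i j)

theorem semiconjBy_inv_smul {s : orthogonalGroup n ℝ} {x y : Matrix n n ℝ} {c : ℝ}
    (hc : c * c = 1) (h : SemiconjBy s.1 x (c • y)) : SemiconjBy (s⁻¹).1 y (c • x) := by
  have hs : SemiconjBy (Unitary.toUnits s : Matrix n n ℝ) (c • x) y := by
    simpa [smul_smul, hc] using h.smul_right c
  exact hs.units_inv_symm_left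

end OrthogonalGroup

section Householder

variable {n R : Type*} [Fintype n] [DecidableEq n] [CommRing R]

/-- The reflection along `f`, for vectors with `f ⬝ᵥ f = 1`. -/
def householder (f : n → R) : Matrix n n R := 1 - (2 : R) • vecMulVec f f

theorem householder_mulVec (f v : n → R) : householder f *ᵥ v = v - (2 * (f ⬝ᵥ v)) • f := by
  rw [householder, sub_mulVec, one_mulVec, smul_mulVec, vecMulVec_mulVec, op_smul_eq_smul,
    smul_smul]

theorem householder_mem_orthogonalGroup {f : n → R} (hf : f ⬝ᵥ f = 1) :
    householder f ∈ orthogonalGroup n R := by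
  have htranspose : (householder f)ᵀ = householder f := by
    simp [householder, transpose_vecMulVec]
  rw [mem_orthogonalGroup_iff, htranspose]
  simp only [householder, mul_sub, sub_mul, mul_one, one_mul, smul_mul_smul_comm,
    vecMulVec_mul_vecMulVec, hf, one_smul, two_mul, add_smul]
  abel

theorem det_householder {f : n → R} (hf : f ⬝ᵥ f = 1) : (householder f).det = -1 := by
  have heq : householder f =
      1 + replicateCol Unit ((-2 : R) • f) * replicateRow Unit f := by
    rw [← vecMulVec_eq, smul_vecMulVec, neg_smul, ← sub_eq_add_neg, householder]
  rw [heq, det_one_add_replicateCol_mul_replicateRow, dotProduct_smul, hf]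
  norm_num

end Householder

section OrthogonalGroupEquiv

variable {n : Type*} [Fintype n]

theorem dotProduct_ofLp_self (f : EuclideanSpace ℝ n) : f.ofLp ⬝ᵥ f.ofLp = ‖f‖ ^ 2 := by
  rw [← real_inner_self_eq_norm_sq, EuclideanSpace.inner_eq_star_dotProduct, star_trivial]

variable [DecidableEq n]

/-- Orthogonal matrices as linear isometries of Euclidean space. -/
noncomputable def orthogonalGroupEquiv (n : Type*) [Fintype n] [DecidableEq n] :
    orthogonalGroup n ℝ ≃* (EuclideanSpace ℝ n ≃ₗᵢ[ℝ] EuclideanSpace ℝ n) :=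
  (Unitary.mapEquiv (StarMulEquiv.ofClass (toEuclideanCLM (n := n) (𝕜 := ℝ)))).toMulEquiv.trans
    Unitary.linearIsometryEquiv

theorem orthogonalGroupEquiv_apply (g : orthogonalGroup n ℝ) (v : EuclideanSpace ℝ n) :
    orthogonalGroupEquiv n g v = WithLp.toLp 2 (g.1 *ᵥ v.ofLp) :=
  rfl

theorem orthogonalGroupEquiv_householder {f : EuclideanSpace ℝ n} (hf : f.ofLp ⬝ᵥ f.ofLp = 1) :
    orthogonalGroupEquiv n ⟨householder f.ofLp, householder_mem_orthogonalGroup hf⟩ =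
      (ℝ ∙ f)ᗮ.reflection := by
  have hnorm : ‖f‖ ^ 2 = 1 := (dotProduct_ofLp_self f).symm.trans hf
  ext v i
  rw [Submodule.reflection_orthogonal_apply, Submodule.reflection_singleton_apply,
    orthogonalGroupEquiv_apply, householder_mulVec]
  simp [EuclideanSpace.inner_eq_star_dotProduct, dotProduct_comm f.ofLp, hnorm, mul_assoc]

theorem closure_range_householder :
    Subgroup.closure (Set.range fun f : {f : n → ℝ // f ⬝ᵥ f = 1} =>
      (⟨householder f.1, householder_mem_orthogonalGroup f.2⟩ : orthogonalGroup n ℝ)) = ⊤ := by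
  let φ : orthogonalGroup n ℝ →* _ := (orthogonalGroupEquiv n).toMonoidHom
  refine top_unique ((Subgroup.map_le_map_iff_of_injective (f := φ)
    (orthogonalGroupEquiv n).injective).1 ?_)
  rw [Subgroup.map_top_of_surjective φ (orthogonalGroupEquiv n).surjective,
    ← LinearIsometryEquiv.reflections_generate, Subgroup.closure_le]
  rintro _ ⟨v, rfl⟩
  rcases eq_or_ne v 0 with rfl | hv
  · refine ⟨1, one_mem _, ?_⟩
    rw [map_one]
    ext1 v
    exact (Submodule.reflection_mem_subspace_eq_self (by simp)).symm
  · have hspan : (ℝ ∙ ‖v‖⁻¹ • v) = ℝ ∙ v :=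
      Submodule.span_singleton_smul_eq (IsUnit.mk0 _ (inv_ne_zero (norm_ne_zero_iff.2 hv))) v
    have hunit : (‖v‖⁻¹ • v).ofLp ⬝ᵥ (‖v‖⁻¹ • v).ofLp = 1 := by
      rw [dotProduct_ofLp_self, show ‖‖v‖⁻¹ • v‖ = 1 from norm_smul_inv_norm (𝕜 := ℝ) hv, one_pow]
    refine ⟨_, Subgroup.subset_closure ⟨⟨_, hunit⟩, rfl⟩, ?_⟩
    exact (orthogonalGroupEquiv_householder hunit).trans (by simp only [hspan])

end OrthogonalGroupEquiv

section Pin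

variable {n : Type*} [Fintype n] [LinearOrder n]

/-- The pairs of an orthogonal matrix `g` and an orthogonal operator `s` on the exterior algebra
such that `s` intertwines Clifford multiplication by `v` with `det g` times that by `g v`. The
condition on the negative generators forces `s` to lie in the Clifford algebra, so that this is the
Pin group with its twisted adjoint action. -/
def realPinGroup (n : Type*) [Fintype n] [LinearOrder n] :
    Subgroup (orthogonalGroup n ℝ × orthogonalGroup (Finset n) ℝ) where
  carrier := {e | (∀ i, SemiconjBy e.2.1 (negativeGenerator i) (e.1.1.det • negativeGenerator i)) ∧
    ∀ v, SemiconjBy e.2.1 (cliffordMap v) (e.1.1.det • cliffordMap (e.1.1 *ᵥ v))}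
  one_mem' := by simp
  mul_mem' := by
    rintro ⟨g, s⟩ ⟨g', s'⟩ ⟨hneg, hvec⟩ ⟨hneg', hvec'⟩
    refine ⟨fun i => ?_, fun v => ?_⟩
    · simpa [smul_smul, mul_comm] using ((hneg i).smul_right g'.1.det).mul_left (hneg' i)
    · simpa [smul_smul, mul_comm] using ((hvec (g'.1 *ᵥ v)).smul_right g'.1.det).mul_left (hvec' v)
  inv_mem' := by
    rintro ⟨g, s⟩ ⟨hneg, hvec⟩
    have hdet : (g⁻¹).1.det = g.1.det := det_transpose g.1
    have hsq := det_mul_self_of_mem_orthogonalGroup g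
    simp only [Set.mem_ofPred_eq, Prod.inv_mk, hdet]
    refine ⟨fun i => ?_, fun v => ?_⟩
    · exact semiconjBy_inv_smul hsq (hneg i)
    · have hv : g.1 *ᵥ (g⁻¹).1 *ᵥ v = v := by
        rw [mulVec_mulVec, ← Submonoid.coe_mul, mul_inv_cancel, OneMemClass.coe_one, one_mulVec]
      simpa only [hv] using semiconjBy_inv_smul hsq (hvec ((g⁻¹).1 *ᵥ v))

/-- The twisted adjoint action of the Pin group. -/
def realPinProj (n : Type*) [Fintype n] [LinearOrder n] : realPinGroup n →* orthogonalGroup n ℝ :=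
  (MonoidHom.fst _ _).comp (realPinGroup n).subtype

theorem continuous_realPinProj : Continuous (realPinProj n) :=
  continuous_fst.comp continuous_subtype_val

theorem isClosed_realPinGroup :
    IsClosed (realPinGroup n : Set (orthogonalGroup n ℝ × orthogonalGroup (Finset n) ℝ)) := by
  have hneg (i : n) : IsClosed {e : orthogonalGroup n ℝ × orthogonalGroup (Finset n) ℝ |
      SemiconjBy e.2.1 (negativeGenerator i) (e.1.1.det • negativeGenerator i)} :=
    isClosed_eq (by fun_prop) (by fun_prop)
  have hvec (v : n → ℝ) : IsClosed {e : orthogonalGroup n ℝ × orthogonalGroup (Finset n) ℝ |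
      SemiconjBy e.2.1 (cliffordMap v) (e.1.1.det • cliffordMap (e.1.1 *ᵥ v))} := by
    have hmap : Continuous (cliffordMap : (n → ℝ) → Matrix (Finset n) (Finset n) ℝ) :=
      LinearMap.continuous_of_finiteDimensional _
    exact isClosed_eq (by fun_prop) (by fun_prop)
  convert (isClosed_iInter hneg).inter (isClosed_iInter hvec)
  ext e
  simp [realPinGroup]

instance realPinGroup_compactSpace : CompactSpace (realPinGroup n) :=
  isCompact_iff_compactSpace.1 isClosed_realPinGroup.isCompact

theorem eq_one_or_eq_neg_one_of_realPinProj_eq_one {e : realPinGroup n} (he : realPinProj n e = 1) :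
    e.1.2.1 = 1 ∨ e.1.2.1 = -1 := by
  obtain ⟨⟨g, s⟩, hneg, hvec⟩ := e
  obtain rfl : g = 1 := he
  simp only [OneMemClass.coe_one, det_one, one_smul, one_mulVec] at hneg hvec ⊢
  have hscalar : s.1 = s.1 ∅ ∅ • (1 : Matrix _ _ ℝ) :=
    eq_smul_one_of_commute (fun i => by
      simpa only [cliffordMap_single] using! hvec (Pi.single i 1))
      hneg
  have hsq : s.1 ∅ ∅ * s.1 ∅ ∅ = 1 := by
    have horth := congrFun₂ ((mem_orthogonalGroup_iff _ ℝ).1 s.2) ∅ ∅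
    rw [hscalar] at horth
    simpa using horth
  refine (mul_self_eq_one_iff.1 hsq).imp (fun h => ?_) (fun h => ?_)
  · rw [hscalar, h, one_smul]
  · rw [hscalar, h, neg_smul, one_smul]

theorem realPin_mul_self_eq_of_realPinProj_eq {e e' : realPinGroup n}
    (h : realPinProj n e = realPinProj n e') : e.1.2.1 * e.1.2.1 = e'.1.2.1 * e'.1.2.1 := by
  have hquot : realPinProj n (e * e'⁻¹) = 1 := by rw [map_mul, map_inv, h, mul_inv_cancel]
  have hfactor : e.1.2.1 = (e * e'⁻¹).1.2.1 * e'.1.2.1 := by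
    conv_lhs => rw [← inv_mul_cancel_right e e']
    rfl
  rcases eq_one_or_eq_neg_one_of_realPinProj_eq_one hquot with h | h <;>
    rw [hfactor, h] <;> simp

/-- A unit vector as an element of the Pin group. -/
def realPinOfUnit (f : n → ℝ) (hf : f ⬝ᵥ f = 1) : realPinGroup n :=
  ⟨(⟨householder f, householder_mem_orthogonalGroup hf⟩, ⟨cliffordMap f, by
      rw [mem_orthogonalGroup_iff, cliffordMap_transpose, cliffordMap_mul_self, hf, one_smul]⟩), by
    refine ⟨fun i => ?_, fun v => ?_⟩
    · simpa [SemiconjBy, det_householder hf] using cliffordMap_mul_negativeGenerator f i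
    · have hanti := cliffordMap_mul_add f v
      simp only [SemiconjBy, det_householder hf, householder_mulVec, map_sub, map_smul,
        neg_smul, one_smul, neg_mul, sub_mul, smul_mul_assoc, cliffordMap_mul_self, hf, ← hanti]
      abel⟩

theorem realPinProj_surjective : Function.Surjective (realPinProj n) := by
  refine MonoidHom.range_eq_top.1 (top_unique ?_)
  rw [← closure_range_householder, Subgroup.closure_le]
  rintro _ ⟨f, rfl⟩
  exact ⟨realPinOfUnit f.1 f.2, rfl⟩

theorem finite_ker_realPinProj : ((realPinProj n).ker : Set (realPinGroup n)).Finite := by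
  refine Set.Finite.of_injOn (f := fun e => e.1.2.1) (t := {1, -1})
    (fun e he => eq_one_or_eq_neg_one_of_realPinProj_eq_one he) (fun e he e' he' hee' => ?_)
    (Set.toFinite _)
  exact Subtype.ext (Prod.ext (he.trans he'.symm) (Subtype.ext hee'))

theorem isCoveringMap_realPinProj : IsCoveringMap (realPinProj n) := by
  have hquot : IsQuotientMap (realPinProj n) :=
    continuous_realPinProj.isClosedMap.isQuotientMap continuous_realPinProj realPinProj_surjective
  exact (hquot.isQuotientCoveringMap_of_isDiscrete_ker_monoidHom
    finite_ker_realPinProj.isDiscrete).isCoveringMap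

end Pin

section SymmetricMatrices

variable {n : Type*} [Fintype n] [DecidableEq n] {A : Matrix n n ℝ}

theorem dotProduct_eigenvectorBasis (hA : A.IsHermitian) (i j : n) :
    (hA.eigenvectorBasis i).ofLp ⬝ᵥ (hA.eigenvectorBasis j).ofLp = if i = j then 1 else 0 := by
  rw [← hA.eigenvectorBasis.inner_eq_ite, EuclideanSpace.inner_eq_star_dotProduct, star_trivial,
    dotProduct_comm]

theorem eigenvalues_eq_one_or_eq_neg_one (hA : A.IsHermitian) (hAA : A * A = 1) (i : n) :
    hA.eigenvalues i = 1 ∨ hA.eigenvalues i = -1 := by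
  have hsq := congrArg (fun B => (hA.eigenvectorBasis i).ofLp ⬝ᵥ
    B *ᵥ (hA.eigenvectorBasis i).ofLp) hAA
  simp only [← mulVec_mulVec, hA.mulVec_eigenvectorBasis, mulVec_smul, one_mulVec, dotProduct_smul,
    dotProduct_eigenvectorBasis, if_true, smul_eq_mul, mul_one] at hsq
  exact mul_self_eq_one_iff.1 hsq

end SymmetricMatrices

section SquaresOfLifts

variable {n : Type*} [Fintype n] [LinearOrder n]

theorem exists_realPin_of_orthonormal {ι : Type*} [DecidableEq ι] {f : ι → n → ℝ}
    (hf : ∀ i j, f i ⬝ᵥ f j = if i = j then 1 else 0) (J : Finset ι) :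
    ∃ e : realPinGroup n, (∀ i, e.1.1.1 *ᵥ f i = (if i ∈ J then -1 else 1 : ℝ) • f i) ∧
      e.1.1.1.det = (-1) ^ J.card ∧ e.1.2.1 * e.1.2.1 = (-1 : ℝ) ^ J.card.choose 2 • 1 := by
  induction J using Finset.induction_on with
  | empty => exact ⟨1, by simp⟩
  | insert a J ha ih =>
    obtain ⟨e, hvec, hdet, hsq⟩ := ih
    have hunit : f a ⬝ᵥ f a = 1 := by simp [hf]
    have hcomm : e.1.2.1 * cliffordMap (f a) =
        (-1 : ℝ) ^ J.card • (cliffordMap (f a) * e.1.2.1) := by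
      simpa [SemiconjBy, hvec, ha, hdet] using e.2.2 (f a)
    refine ⟨e * realPinOfUnit (f a) hunit, fun i => ?_, ?_, ?_⟩
    · change (e.1.1.1 * householder (f a)) *ᵥ f i = _
      rw [← mulVec_mulVec, householder_mulVec, hf]
      rcases eq_or_ne a i with rfl | hai
      · rw [mulVec_sub, mulVec_smul, hvec]
        simp [ha, two_smul]
      · simp [hvec, hai, hai.symm]
    · change (e.1.1.1 * householder (f a)).det = _
      rw [det_mul, hdet, det_householder hunit, Finset.card_insert_of_notMem ha, pow_succ]
    · change e.1.2.1 * cliffordMap (f a) * (e.1.2.1 * cliffordMap (f a)) = _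
      calc _ = (-1 : ℝ) ^ J.card •
            (e.1.2.1 * (cliffordMap (f a) * cliffordMap (f a)) * e.1.2.1) := by
            nth_rewrite 2 [hcomm]
            simp only [mul_smul_comm, mul_assoc]
        _ = _ := by
            rw [cliffordMap_mul_self, hunit, one_smul, mul_one, hsq, smul_smul, ← pow_add,
              Finset.card_insert_of_notMem ha, Nat.choose_succ_succ', Nat.choose_one_right]

theorem exists_trace_eq_of_realPinProj_mul_self_eq_one {e : realPinGroup n}
    (he : realPinProj n e * realPinProj n e = 1) :
    ∃ k : ℕ, (realPinProj n e).1.trace = Fintype.card n - 2 * k ∧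
      (realPinProj n e).1.det = (-1) ^ k ∧ e.1.2.1 * e.1.2.1 = (-1 : ℝ) ^ k.choose 2 • 1 := by
  have hA : (realPinProj n e).1.IsHermitian :=
    (congrArg Subtype.val (eq_inv_of_mul_eq_one_left he)).symm
  let J : Finset n := {i | hA.eigenvalues i = -1}
  have hJ (i : n) : hA.eigenvalues i = if i ∈ J then -1 else 1 := by
    rcases eigenvalues_eq_one_or_eq_neg_one hA (congrArg Subtype.val he) i with h | h <;>
      norm_num [J, h]
  obtain ⟨e', hvec, hdet, hsq⟩ := exists_realPin_of_orthonormal (dotProduct_eigenvectorBasis hA) J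
  have hproj : realPinProj n e = realPinProj n e' := by
    refine Subtype.ext (toEuclideanLin.injective (hA.eigenvectorBasis.toBasis.ext fun i => ?_))
    rw [OrthonormalBasis.coe_toBasis]
    refine congrArg (WithLp.toLp 2) ((hA.mulVec_eigenvectorBasis i).trans ?_)
    rw [hJ]
    exact (hvec i).symm
  refine ⟨J.card, ?_, ?_, ?_⟩
  · have hsum (i : n) : hA.eigenvalues i = 1 - 2 * if i ∈ J then 1 else 0 := by
      rw [hJ]
      split_ifs <;> norm_num
    rw [hA.trace_eq_sum_eigenvalues]
    simp [hsum, mul_comm]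
  · rw [hproj]
    exact hdet
  · rw [realPin_mul_self_eq_of_realPinProj_eq hproj, hsq]

theorem four_dvd_of_even_of_even_choose_two {k : ℕ} (hk : Even k) (hk' : Even (k.choose 2)) :
    4 ∣ k := by
  obtain ⟨j, rfl⟩ := even_iff_exists_two_mul.1 hk
  rw [Nat.choose_two_right, mul_assoc, Nat.mul_div_cancel_left _ two_pos, Nat.even_mul] at hk'
  rcases hk' with hj | hj
  · exact mul_dvd_mul_left 2 hj.two_dvd
  · obtain ⟨m, hm⟩ := hj
    omega

theorem card_mod_eight_of_mul_self_eq_one {e : realPinGroup n} (he : e * e = 1)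
    (hdet : (realPinProj n e).1.det = 1) (htrace : |(realPinProj n e).1.trace| ≤ 1) :
    Fintype.card n % 8 = 7 ∨ Fintype.card n % 8 = 0 ∨ Fintype.card n % 8 = 1 := by
  obtain ⟨k, hk_trace, hk_det, hk_sq⟩ := exists_trace_eq_of_realPinProj_mul_self_eq_one (e := e)
    (by rw [← map_mul, he, map_one])
  have hk : Even k := (neg_one_pow_eq_one_iff_even (by norm_num)).1 (hk_det.symm.trans hdet)
  have hk' : Even (k.choose 2) := by
    have hone : (-1 : ℝ) ^ k.choose 2 • (1 : Matrix (Finset n) (Finset n) ℝ) = 1 :=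
      hk_sq.symm.trans (congrArg (fun e : realPinGroup n => e.1.2.1) he)
    refine (neg_one_pow_eq_one_iff_even (R := ℝ) (by norm_num)).1 ?_
    simpa using congrFun₂ hone ∅ ∅
  obtain ⟨m, rfl⟩ := four_dvd_of_even_of_even_choose_two hk hk'
  have hcard : |(Fintype.card n - 2 * (4 * m : ℕ) : ℤ)| ≤ 1 := by
    rw [hk_trace] at htrace
    exact_mod_cast htrace
  rw [abs_le] at hcard
  omega

end SquaresOfLifts

section Components

variable {d : ℕ}

theorem IsUniUpper.exists_upperUnipotentGroup {u : Matrix (Fin d) (Fin d) ℝ}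
    (hu : IsUniUpper d u) : ∃ g : upperUnipotentGroup (Fin d), (g : GL (Fin d) ℝ).1 = u :=
  ⟨⟨GeneralLinearGroup.mkOfDetNeZero u (hu.det_eq_one_s1 ▸ one_ne_zero),
    mem_upperUnipotentGroup_iff.2 ⟨fun i j hij => hu.1 i j hij, hu.2⟩⟩, rfl⟩

theorem det_antidiagonal_eq_one {ε : Fin d → ℝ} (hε : ∀ i, ε i * ε i = 1)
    {l₁ l₂ : lowerPosGroup (Fin d)}
    (h : ((l₁ : GL (Fin d) ℝ).1 * antidiagonal ε * (l₂ : GL (Fin d) ℝ).1).det = 1) :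
    (antidiagonal ε).det = 1 := by
  have hsq := det_mul_self_of_mem_orthogonalGroup ⟨_, antidiagonal_mem_orthogonalGroup hε⟩
  refine (mul_self_eq_one_iff.1 hsq).resolve_right fun hneg => ?_
  rw [det_mul, det_mul, hneg] at h
  linarith [mul_pos (det_lowerPosGroup_pos l₁) (det_lowerPosGroup_pos l₂)]

theorem antidiagonal_mul_mul_transpose_mem_image {ε : Fin d → ℝ} (hε : ∀ i, ε i ≠ 0)
    {m : lowerPosGroup (Fin d)} (hm : ((m : GL (Fin d) ℝ) : Matrix (Fin d) (Fin d) ℝ).IsDiag) :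
    antidiagonal ε * (m : GL (Fin d) ℝ).1 * (antidiagonal ε)ᵀ ∈
      Units.val '' (lowerPosGroup (Fin d) : Set (GL (Fin d) ℝ)) := by
  rw [← hm.diagonal_diag, antidiagonal_mul_diagonal_mul_transpose, mem_val_image_lowerPosGroup_iff]
  refine ⟨blockTriangular_diagonal _, fun i => ?_⟩
  have hpos := (mem_lowerPosGroup_iff.1 m.2).2 i.rev
  rw [diagonal_apply_eq, mul_right_comm]
  exact mul_pos (mul_self_pos.2 (hε i)) hpos

theorem mod_eight_of_eq_inv {X : Type*} [TopologicalSpace X] [PreconnectedSpace X]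
    {u : X → Matrix (Fin d) (Fin d) ℝ} (hu : Continuous u) (hmem : ∀ x, u x ∈ Sset d) {x y : X}
    (hxy : u y = (u x)⁻¹) : d % 8 = 7 ∨ d % 8 = 0 ∨ d % 8 = 1 := by
  obtain ⟨ε, l₁, l₂, hε, hl₂, hfac⟩ := exists_eq_mul_antidiagonal_mul hu
    fun x => isUnit_det_leadingBlock_of_mem_Sset (hmem x)
  choose g hg using fun x => (hmem x).1.exists_upperUnipotentGroup
  have hg_cont : Continuous g :=
    (isEmbedding_val_generalLinearGroup.comp IsEmbedding.subtypeVal).continuous_iff.2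
      (hu.congr fun x => (hg x).symm)
  have hg_inv : g y = (g x)⁻¹ := by
    refine Subtype.ext (Units.ext ?_)
    rw [hg, hxy, Subgroup.coe_inv, coe_units_inv, hg]
  have hε_ne (i : Fin d) : ε i ≠ 0 := left_ne_zero_of_mul_eq_one (hε i)
  let z : orthogonalGroup (Fin d) ℝ := ⟨_, antidiagonal_mem_orthogonalGroup hε⟩
  obtain ⟨e, hez, hee⟩ := (realIwasawaDecomposition (Fin d)).exists_mul_self_eq_one (z := z)
    isCoveringMap_realPinProj contractsToOne_lowerPosGroup contractsToOne_upperUnipotentGroup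
    hg_cont hl₂ (fun x => Units.ext ((hg x).trans (hfac x))) isPreconnected_isDiag_lowerPosGroup
    isDiag_one
    (fun m hm => Units.val_injective.mem_set_image.1
      (antidiagonal_mul_mul_transpose_mem_image hε_ne hm))
    (fun m hm => isDiag_of_antidiagonal_mul_mul_antidiagonal hε_ne (mem_lowerPosGroup_iff.1 m.2).1
      (mem_lowerPosGroup_iff.1 hm).1)
    hg_inv
  have hdet : (antidiagonal ε).det = 1 :=
    det_antidiagonal_eq_one hε (by rw [← hfac x, (hmem x).1.det_eq_one_s1])
  rw [← Fintype.card_fin d]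
  exact card_mod_eight_of_mul_self_eq_one hee (by rwa [hez])
    (by rw [hez]; exact abs_trace_antidiagonal_le_one hε)

end Components

theorem inversion_swaps_components_general (d : ℕ)
    (hd : d % 8 = 2 ∨ d % 8 = 3 ∨ d % 8 = 4 ∨ d % 8 = 5 ∨ d % 8 = 6)
    (u : Matrix (Fin d) (Fin d) ℝ) (hu : u ∈ Sset d) :
    u⁻¹ ∉ connectedComponentIn (Sset d) u := by
  intro hinv
  have : PreconnectedSpace (connectedComponentIn (Sset d) u) :=
    Subtype.preconnectedSpace isPreconnected_connectedComponentIn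
  have hmod : d % 8 = 7 ∨ d % 8 = 0 ∨ d % 8 = 1 :=
    mod_eight_of_eq_inv (x := ⟨u, mem_connectedComponentIn hu⟩) (y := ⟨u⁻¹, hinv⟩)
      continuous_subtype_val (fun v => connectedComponentIn_subset _ _ v.2) rfl
  omega

theorem inversion_swaps_components (d : ℕ) (hd5 : d ≠ 5)
    (hd : d % 8 = 2 ∨ d % 8 = 3 ∨ d % 8 = 4 ∨ d % 8 = 5 ∨ d % 8 = 6)
    (u : Matrix (Fin d) (Fin d) ℝ) (hu : u ∈ Sset d) :
    u⁻¹ ∉ connectedComponentIn (Sset d) u :=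
  inversion_swaps_components_general d hd u hu
end

section
/- Let W = {(x,y,z) ∈ ℝ³ : y ≠ 0 and xz − y ≠ 0}, with the subspace topology from ℝ³. Define the six subsets Ω₁ = {x>0, y>0, z>0, xz−y>0}, Ω̂₁ = {x<0, y>0, z<0, xz−y>0}, Ω₂ = {x<0, y<0, z>0, xz−y<0}, Ω̂₂ = {x>0, y<0, z<0, xz−y<0}, Ω₃ = {y>0, xz−y<0}, Ω̂₃ = {y<0, xz−y>0}. Then these six sets are pairwise disjoint, their union is W, and each of them is a connected component of W. -/
/-- `W = {(x,y,z) ∈ ℝ³ : y ≠ 0 and xz − y ≠ 0}`. -/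
def Wset : Set (ℝ × ℝ × ℝ) :=
  {p | p.2.1 ≠ 0 ∧ p.1 * p.2.2 - p.2.1 ≠ 0}

/-- The six candidate components `Ω₁, Ω̂₁, Ω₂, Ω̂₂, Ω₃, Ω̂₃` (in this order). -/
def OmegaSets : Fin 6 → Set (ℝ × ℝ × ℝ) :=
  ![{p | 0 < p.1 ∧ 0 < p.2.1 ∧ 0 < p.2.2 ∧ 0 < p.1 * p.2.2 - p.2.1},
    {p | p.1 < 0 ∧ 0 < p.2.1 ∧ p.2.2 < 0 ∧ 0 < p.1 * p.2.2 - p.2.1},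
    {p | p.1 < 0 ∧ p.2.1 < 0 ∧ 0 < p.2.2 ∧ p.1 * p.2.2 - p.2.1 < 0},
    {p | 0 < p.1 ∧ p.2.1 < 0 ∧ p.2.2 < 0 ∧ p.1 * p.2.2 - p.2.1 < 0},
    {p | 0 < p.2.1 ∧ p.1 * p.2.2 - p.2.1 < 0},
    {p | p.2.1 < 0 ∧ 0 < p.1 * p.2.2 - p.2.1}]

/-!
Project `(x, y, z)` to the `(x, z)`-plane. The part of `W` over `(x, z)` is the `y`-line with the
points `0` and `x * z` removed. Its two unbounded pieces are present over the whole plane and sweep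
out `Ω₃` and `Ω̂₃`. The bounded piece between `0` and `x * z` is nonempty only if `x * z ≠ 0`, so it
sweeps out one set over each of the four open quadrants. Each of these six sets is open with
connected image and connected fibres under the projection, which is an open map, so it is connected.
-/

open Set

section Topology

variable {X E : Type*} [TopologicalSpace X] [TopologicalSpace E]

theorem isPreconnected_of_isOpenMap_of_fiber {f : E → X} (hf : IsOpenMap f) {s : Set E}
    (hs : IsOpen s) (himage : IsPreconnected (f '' s))
    (hfiber : ∀ x ∈ f '' s, IsPreconnected (s ∩ f ⁻¹' {x})) : IsPreconnected s := by
  rintro u v hu hv hsuv hsu hsv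
  obtain ⟨x, hx, ⟨p, ⟨hps, hpu⟩, hpx⟩, q, ⟨hqs, hqv⟩, hqx⟩ :
      (f '' s ∩ (f '' (s ∩ u) ∩ f '' (s ∩ v))).Nonempty := by
    refine himage _ _ (hf _ (hs.inter hu)) (hf _ (hs.inter hv)) ?_ ?_ ?_
    · rw [← image_union, ← inter_union_distrib_left, inter_eq_left.2 hsuv]
    · rwa [inter_eq_right.2 (image_mono inter_subset_left), image_nonempty]
    · rwa [inter_eq_right.2 (image_mono inter_subset_left), image_nonempty]
  exact (hfiber x hx u v hu hv (inter_subset_left.trans hsuv) ⟨p, ⟨hps, hpx⟩, hpu⟩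
    ⟨q, ⟨hqs, hqx⟩, hqv⟩).mono (inter_subset_inter_left _ inter_subset_left)

theorem connectedComponentIn_iUnion_eq_of_isOpen {ι : Type*} {s : ι → Set X}
    (hopen : ∀ i, IsOpen (s i)) (hconn : ∀ i, IsPreconnected (s i))
    (hdisj : Pairwise (Function.onFun Disjoint s)) {i : ι} {x : X} (hx : x ∈ s i) :
    connectedComponentIn (⋃ j, s j) x = s i := by
  have hsub : s i ⊆ ⋃ j, s j := subset_iUnion s i
  have hcover : ⋃ j, s j ⊆ s i ∪ ⋃ j ≠ i, s j := fun y hy => by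
    obtain ⟨j, hj⟩ := mem_iUnion.1 hy
    rcases eq_or_ne j i with rfl | hji
    · exact Or.inl hj
    · exact Or.inr (mem_biUnion hji hj)
  refine Subset.antisymm ?_ ((hconn i).subset_connectedComponentIn hx hsub)
  exact isPreconnected_connectedComponentIn.subset_left_of_subset_union (hopen i)
    (isOpen_biUnion fun j _ => hopen j)
    (disjoint_iUnion₂_right.2 fun j hji => hdisj (Ne.symm hji))
    ((connectedComponentIn_subset _ _).trans hcover)
    ⟨x, mem_connectedComponentIn (hsub hx), hx⟩

end Topology

/-- The images of `Ω₁, Ω̂₁, Ω₂, Ω̂₂, Ω₃, Ω̂₃` (in this order) under `(x, y, z) ↦ (x, z)`. -/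
def omegaBase : Fin 6 → Set (ℝ × ℝ) :=
  ![Ioi 0 ×ˢ Ioi 0, Iio 0 ×ˢ Iio 0, Iio 0 ×ˢ Ioi 0, Ioi 0 ×ˢ Iio 0, univ, univ]

/-- `omegaFiber a t` is the set of all `y` with `(x, y, z) ∈ OmegaSets a`, for `(x, z)` in
`omegaBase a` with `x * z = t`. -/
def omegaFiber : Fin 6 → ℝ → Set ℝ :=
  ![fun t => Ioo 0 t, fun t => Ioo 0 t, fun t => Ioo t 0, fun t => Ioo t 0,
    fun t => Ioi (max 0 t), fun t => Iio (min 0 t)]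

theorem mem_omegaSets_iff (a : Fin 6) (x y z : ℝ) :
    (x, y, z) ∈ OmegaSets a ↔ (x, z) ∈ omegaBase a ∧ y ∈ omegaFiber a (x * z) := by
  fin_cases a
  · exact ⟨fun ⟨hx, hy, hz, hw⟩ => ⟨⟨hx, hz⟩, hy, sub_pos.1 hw⟩,
      fun ⟨⟨hx, hz⟩, hy, hw⟩ => ⟨hx, hy, hz, sub_pos.2 hw⟩⟩
  · exact ⟨fun ⟨hx, hy, hz, hw⟩ => ⟨⟨hx, hz⟩, hy, sub_pos.1 hw⟩,
      fun ⟨⟨hx, hz⟩, hy, hw⟩ => ⟨hx, hy, hz, sub_pos.2 hw⟩⟩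
  · exact ⟨fun ⟨hx, hy, hz, hw⟩ => ⟨⟨hx, hz⟩, sub_neg.1 hw, hy⟩,
      fun ⟨⟨hx, hz⟩, hw, hy⟩ => ⟨hx, hy, hz, sub_neg.2 hw⟩⟩
  · exact ⟨fun ⟨hx, hy, hz, hw⟩ => ⟨⟨hx, hz⟩, sub_neg.1 hw, hy⟩,
      fun ⟨⟨hx, hz⟩, hw, hy⟩ => ⟨hx, hy, hz, sub_neg.2 hw⟩⟩
  · exact ⟨fun ⟨hy, hw⟩ => ⟨trivial, max_lt hy (sub_neg.1 hw)⟩,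
      fun ⟨_, h⟩ => ⟨(max_lt_iff.1 h).1, sub_neg.2 (max_lt_iff.1 h).2⟩⟩
  · exact ⟨fun ⟨hy, hw⟩ => ⟨trivial, lt_min hy (sub_pos.1 hw)⟩,
      fun ⟨_, h⟩ => ⟨(lt_min_iff.1 h).1, sub_pos.2 (lt_min_iff.1 h).2⟩⟩

theorem isPreconnected_omegaBase (a : Fin 6) : IsPreconnected (omegaBase a) := by
  fin_cases a
  exacts [isPreconnected_Ioi.prod isPreconnected_Ioi, isPreconnected_Iio.prod isPreconnected_Iio,
    isPreconnected_Iio.prod isPreconnected_Ioi, isPreconnected_Ioi.prod isPreconnected_Iio,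
    isPreconnected_univ, isPreconnected_univ]

theorem isPreconnected_omegaFiber (a : Fin 6) (t : ℝ) : IsPreconnected (omegaFiber a t) := by
  fin_cases a
  exacts [isPreconnected_Ioo, isPreconnected_Ioo, isPreconnected_Ioo, isPreconnected_Ioo,
    isPreconnected_Ioi, isPreconnected_Iio]

theorem omegaFiber_nonempty {a : Fin 6} {x z : ℝ} (h : (x, z) ∈ omegaBase a) :
    (omegaFiber a (x * z)).Nonempty := by
  fin_cases a
  · exact nonempty_Ioo.2 (mul_pos h.1 h.2)
  · exact nonempty_Ioo.2 (mul_pos_of_neg_of_neg h.1 h.2)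
  · exact nonempty_Ioo.2 (mul_neg_of_neg_of_pos h.1 h.2)
  · exact nonempty_Ioo.2 (mul_neg_of_pos_of_neg h.1 h.2)
  · exact nonempty_Ioi
  · exact nonempty_Iio

theorem image_omegaSets (a : Fin 6) : Prod.map id Prod.snd '' OmegaSets a = omegaBase a := by
  ext ⟨x, z⟩
  constructor
  · rintro ⟨⟨x', y, z'⟩, hp, hxz⟩
    exact hxz ▸ ((mem_omegaSets_iff a x' y z').1 hp).1
  · intro hxz
    obtain ⟨y, hy⟩ := omegaFiber_nonempty hxz
    exact ⟨(x, y, z), (mem_omegaSets_iff a x y z).2 ⟨hxz, hy⟩, rfl⟩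

theorem omegaSets_inter_preimage {a : Fin 6} {x z : ℝ} (h : (x, z) ∈ omegaBase a) :
    OmegaSets a ∩ Prod.map id Prod.snd ⁻¹' {(x, z)} =
      (fun y => (x, y, z)) '' omegaFiber a (x * z) := by
  ext ⟨x', y, z'⟩
  constructor
  · rintro ⟨hp, hxz⟩
    obtain ⟨rfl, rfl⟩ := Prod.mk.inj hxz
    exact ⟨y, ((mem_omegaSets_iff a _ y _).1 hp).2, rfl⟩
  · rintro ⟨y, hy, hp⟩
    exact hp ▸ ⟨(mem_omegaSets_iff a x y z).2 ⟨h, hy⟩, rfl⟩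

theorem isOpen_omegaSets (a : Fin 6) : IsOpen (OmegaSets a) := by
  have isOpen_pos {f : ℝ × ℝ × ℝ → ℝ} (hf : Continuous f) : IsOpen {p | 0 < f p} :=
    isOpen_lt continuous_const hf
  have isOpen_neg {f : ℝ × ℝ × ℝ → ℝ} (hf : Continuous f) : IsOpen {p | f p < 0} :=
    isOpen_lt hf continuous_const
  have hx : Continuous fun p : ℝ × ℝ × ℝ => p.1 := by fun_prop
  have hy : Continuous fun p : ℝ × ℝ × ℝ => p.2.1 := by fun_prop
  have hz : Continuous fun p : ℝ × ℝ × ℝ => p.2.2 := by fun_prop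
  have hw : Continuous fun p : ℝ × ℝ × ℝ => p.1 * p.2.2 - p.2.1 := by fun_prop
  fin_cases a
  · exact (isOpen_pos hx).and ((isOpen_pos hy).and ((isOpen_pos hz).and (isOpen_pos hw)))
  · exact (isOpen_neg hx).and ((isOpen_pos hy).and ((isOpen_neg hz).and (isOpen_pos hw)))
  · exact (isOpen_neg hx).and ((isOpen_neg hy).and ((isOpen_pos hz).and (isOpen_neg hw)))
  · exact (isOpen_pos hx).and ((isOpen_neg hy).and ((isOpen_neg hz).and (isOpen_neg hw)))
  · exact (isOpen_pos hy).and (isOpen_neg hw)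
  · exact (isOpen_neg hy).and (isOpen_pos hw)

theorem isPreconnected_omegaSets (a : Fin 6) : IsPreconnected (OmegaSets a) := by
  have hproj : IsOpenMap (Prod.map id Prod.snd : ℝ × ℝ × ℝ → ℝ × ℝ) :=
    IsOpenMap.id.prodMap isOpenMap_snd
  refine isPreconnected_of_isOpenMap_of_fiber hproj (isOpen_omegaSets a) ?_ ?_
  · rw [image_omegaSets]
    exact isPreconnected_omegaBase a
  · rw [image_omegaSets]
    rintro ⟨x, z⟩ hxz
    rw [omegaSets_inter_preimage hxz]
    exact (isPreconnected_omegaFiber a _).image _ (by fun_prop)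

theorem pairwise_disjoint_omegaSets : Pairwise (Function.onFun Disjoint OmegaSets) := by
  intro a b hab
  refine disjoint_left.2 ?_
  rintro ⟨x, y, z⟩ ha hb
  -- Any two distinct sets of the family prescribe opposite signs for `x`, `y` or `x * z - y`.
  fin_cases a <;> fin_cases b <;> first
    | exact absurd rfl hab
    | (simp only [OmegaSets] at ha hb
       dsimp at ha hb
       linarith)

theorem omegaSets_subset_Wset (a : Fin 6) : OmegaSets a ⊆ Wset := by
  rintro ⟨x, y, z⟩ h
  fin_cases a
  · exact ⟨h.2.1.ne', h.2.2.2.ne'⟩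
  · exact ⟨h.2.1.ne', h.2.2.2.ne'⟩
  · exact ⟨h.2.1.ne, h.2.2.2.ne⟩
  · exact ⟨h.2.1.ne, h.2.2.2.ne⟩
  · exact ⟨h.1.ne', h.2.ne⟩
  · exact ⟨h.1.ne, h.2.ne'⟩

theorem iUnion_omegaSets : ⋃ a, OmegaSets a = Wset := by
  refine Subset.antisymm (iUnion_subset omegaSets_subset_Wset) ?_
  rintro ⟨x, y, z⟩ ⟨hy : y ≠ 0, hw : x * z - y ≠ 0⟩
  rw [mem_iUnion]
  rcases hy.lt_or_gt with hy | hy <;> rcases hw.lt_or_gt with hw | hw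
  · have hxz : x * z < 0 := by linarith
    rcases mul_neg_iff.1 hxz with ⟨hx, hz⟩ | ⟨hx, hz⟩
    · exact ⟨3, hx, hy, hz, hw⟩
    · exact ⟨2, hx, hy, hz, hw⟩
  · exact ⟨5, hy, hw⟩
  · exact ⟨4, hy, hw⟩
  · have hxz : 0 < x * z := by linarith
    rcases mul_pos_iff.1 hxz with ⟨hx, hz⟩ | ⟨hx, hz⟩
    · exact ⟨0, hx, hy, hz, hw⟩
    · exact ⟨1, hx, hy, hz, hw⟩

theorem components_of_W :
    Pairwise (Function.onFun Disjoint OmegaSets) ∧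
    (⋃ a : Fin 6, OmegaSets a) = Wset ∧
    (∀ a : Fin 6, ∀ p ∈ OmegaSets a, connectedComponentIn Wset p = OmegaSets a) := by
  refine ⟨pairwise_disjoint_omegaSets, iUnion_omegaSets, fun a p hp => ?_⟩
  rw [← iUnion_omegaSets]
  exact connectedComponentIn_iUnion_eq_of_isOpen isOpen_omegaSets isPreconnected_omegaSets
    pairwise_disjoint_omegaSets hp
end

section
/- Let n ≥ 1 and let t = (t_{ij}) be a family of real numbers indexed by pairs with 1 ≤ i ≤ n and 1 ≤ j ≤ n+1−i. Define u(t) = B_n · B_{n−1} ⋯ B_1, where for each m the block B_m is the ordered product B_m = (I + t_{1,m} E_{1,2})(I + t_{2,m−1} E_{2,3}) ⋯ (I + t_{m,1} E_{m,m+1}) = ∏_{i=1}^{m} (I + t_{i,m+1−i} E_{i,i+1}) with factors taken in order of increasing i. Then u(t)⁻¹ = u(t′), where t′_{ij} = −t_{i, n+2−i−j} for all 1 ≤ i ≤ n, 1 ≤ j ≤ n+1−i. -/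
/-- `E_{i,i+1}`: the `(n+1)×(n+1)` matrix whose only nonzero entry is a `1` in
position `(i, i+1)` (one-based indexing). -/
def elemE (d i : ℕ) : Matrix (Fin d) (Fin d) ℝ :=
  Matrix.of fun a b => if (a : ℕ) + 1 = i ∧ (b : ℕ) = i then 1 else 0

/-- The block `B_m = ∏_{i=1}^{m} (I + t_{i,m+1−i} E_{i,i+1})`, factors in order of
increasing `i`. -/
def blockB (n : ℕ) (t : ℕ → ℕ → ℝ) (m : ℕ) : Matrix (Fin (n + 1)) (Fin (n + 1)) ℝ :=
  ((List.range m).map (fun i' => (1 : Matrix (Fin (n + 1)) (Fin (n + 1)) ℝ)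
      + t (i' + 1) (m - i') • elemE (n + 1) (i' + 1))).prod

/-- `u(t) = B_n · B_{n−1} ⋯ B_1`. -/
def uProd (n : ℕ) (t : ℕ → ℕ → ℝ) : Matrix (Fin (n + 1)) (Fin (n + 1)) ℝ :=
  ((List.range n).map (fun m' => blockB n t (n - m'))).prod

/-!
Arrange the factors of `u(t)` in the staircase `i + j ≤ n + 1`. The product `u(t)` reads it
antidiagonal by antidiagonal, so inverting the factors and reversing their order reads the
inverted staircase by antidiagonals too, now with increasing `i + j`, and with increasing `j`
along each of them. The substitution `j ↦ n + 2 - i - j` exchanges antidiagonals and columns,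
so `u(t')` reads the same inverted staircase column by column. The two readings agree because
they only interchange factors whose row indices differ by at least two, and these commute.
-/

section Monoid

variable {M : Type*} [Monoid M]

theorem prod_range_mul_prod_range_eq_one {n : ℕ} {f g : ℕ → M}
    (h : ∀ i j, i + j + 1 = n → f i * g j = 1) :
    ((List.range n).map f).prod * ((List.range n).map g).prod = 1 := by
  induction n generalizing g with
  | zero => simp
  | succ n ih =>
    have h_tail : ((List.range n).map f).prod * ((List.range n).map fun j => g (j + 1)).prod = 1 :=
      ih fun i j hij => h i (j + 1) (by omega)
    rw [List.prod_range_succ, List.prod_range_succ' g, mul_assoc, ← mul_assoc (f n),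
      h n 0 rfl, one_mul, h_tail]

theorem prod_map_mul_of_pairwise_commute {ι : Type*} {l : List ι} {f g : ι → M}
    (h : l.Pairwise fun a b => Commute (g a) (f b)) :
    (l.map fun a => f a * g a).prod = (l.map f).prod * (l.map g).prod := by
  induction l with
  | nil => simp
  | cons a l ih =>
    obtain ⟨h_head, h_tail⟩ := List.pairwise_cons.1 h
    have h_comm : Commute (g a) (l.map f).prod :=
      Commute.list_prod_right _ _ (List.forall_mem_map.2 h_head)
    simp only [List.map_cons, List.prod_cons, ih h_tail]
    exact h_comm.mul_mul_mul_comm _ _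

theorem prod_columns_eq_prod_antidiagonals {y : ℕ → ℕ → M}
    (hy : ∀ i j k l, i + 1 < j → Commute (y i k) (y j l)) (n : ℕ) :
    ((List.range n).map fun k => ((List.range (n - k)).map fun i => y i k).prod).prod =
      ((List.range n).map fun m => ((List.range (m + 1)).map fun k => y (m - k) k).prod).prod := by
  induction n with
  | zero => simp
  | succ n ih =>
    have h_split : ∀ k ∈ List.range (n + 1),
        ((List.range (n + 1 - k)).map fun i => y i k).prod =
          ((List.range (n - k)).map fun i => y i k).prod * y (n - k) k := fun k hk => by
      rw [Nat.succ_sub (Nat.le_of_lt_succ (List.mem_range.1 hk)), List.prod_range_succ]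
    have h_comm : (List.range (n + 1)).Pairwise fun k l =>
        Commute (y (n - k) k) ((List.range (n - l)).map fun i => y i l).prod :=
      List.pairwise_lt_range.imp fun {k l} hkl =>
        Commute.list_prod_right _ _ <| List.forall_mem_map.2 fun i hi =>
          (hy i (n - k) l k (by have := List.mem_range.1 hi; omega)).symm
    have h_last : ((List.range (n - n)).map fun i => y i n).prod = 1 := by simp
    rw [List.map_congr_left h_split, prod_map_mul_of_pairwise_commute h_comm,
      List.prod_range_succ, h_last, mul_one, ih,
      List.prod_range_succ fun m => ((List.range (m + 1)).map fun k => y (m - k) k).prod]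

/-- The product of the staircase `(x i j)`, `1 ≤ i`, `1 ≤ j`, `i + j ≤ n + 1`, taken antidiagonal
by antidiagonal: `i + j` decreases from block to block, and `i` increases within a block. This is
the shape of `uProd`, with arbitrary monoid elements in place of the factors
`I + t_{i,j} E_{i,i+1}`. As there, rows and columns are indexed from one. -/
def staircaseProd (n : ℕ) (x : ℕ → ℕ → M) : M :=
  ((List.range n).map fun m =>
    ((List.range (n - m)).map fun i => x (i + 1) (n - m - i)).prod).prod

theorem staircaseProd_reflect_eq_prod_columns (n : ℕ) (y : ℕ → ℕ → M) :
    staircaseProd n (fun i j => y i (n + 2 - i - j)) =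
      ((List.range n).map fun k =>
        ((List.range (n - k)).map fun i => y (i + 1) (k + 1)).prod).prod := by
  refine congrArg List.prod (List.map_congr_left fun k _ => ?_)
  refine congrArg List.prod (List.map_congr_left fun i hi => ?_)
  have h_col : n + 2 - (i + 1) - (n - k - i) = k + 1 := by have := List.mem_range.1 hi; omega
  exact congrArg (y (i + 1)) h_col

theorem inverse_of_factorization_general {x y : ℕ → ℕ → M} (hxy : ∀ i j, x i j * y i j = 1)
    (hy : ∀ i j k l, i + 1 < j → Commute (y i k) (y j l)) (n : ℕ) :
    staircaseProd n x * staircaseProd n (fun i j => y i (n + 2 - i - j)) = 1 := by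
  rw [staircaseProd_reflect_eq_prod_columns,
    prod_columns_eq_prod_antidiagonals (y := fun i k => y (i + 1) (k + 1))
      fun i j k l hij => hy _ _ _ _ (Nat.succ_lt_succ hij)]
  refine prod_range_mul_prod_range_eq_one fun p m hpm => ?_
  rw [show n - p = m + 1 by omega]
  refine prod_range_mul_prod_range_eq_one fun i k hik => ?_
  rw [show m + 1 - i = k + 1 by omega, show m - k = i by omega]
  exact hxy _ _

end Monoid

section Module

variable {R A : Type*}

theorem one_add_smul_mul_one_add_neg_smul [Ring R] [Ring A] [Module R A] [IsScalarTower R A A]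
    [SMulCommClass R A A] {e : A} (he : e * e = 0) (a : R) :
    (1 + a • e) * (1 + -a • e) = 1 := by
  simp [mul_add, add_mul, smul_mul_assoc, mul_smul_comm, he]

theorem commute_one_add_smul_of_mul_eq_zero [Semiring R] [Semiring A] [Module R A]
    [IsScalarTower R A A] [SMulCommClass R A A] {e f : A} (hef : e * f = 0) (hfe : f * e = 0)
    (a b : R) : Commute (1 + a • e) (1 + b • f) := by
  have h_comm : Commute (a • e) (b • f) := by
    simp only [commute_iff_eq, smul_mul_assoc, mul_smul_comm, hef, hfe, smul_zero]
  exact (Commute.one_left _).add_left ((Commute.one_right _).add_right h_comm)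

end Module

theorem elemE_mul_elemE_of_ne (d : ℕ) {i j : ℕ} (h : j ≠ i + 1) : elemE d i * elemE d j = 0 := by
  ext a b
  rw [Matrix.mul_apply, Matrix.zero_apply]
  refine Finset.sum_eq_zero fun c _ => ?_
  simp only [elemE, Matrix.of_apply, ite_zero_mul_ite_zero]
  exact if_neg (by omega)

theorem inverse_of_factorization (n : ℕ) (hn : 1 ≤ n) (t : ℕ → ℕ → ℝ) :
    (uProd n t)⁻¹ = uProd n (fun i j => - t i (n + 2 - i - j)) := by
  have h_inv (i j : ℕ) : (1 + t i j • elemE (n + 1) i) * (1 + -t i j • elemE (n + 1) i) = 1 :=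
    one_add_smul_mul_one_add_neg_smul (elemE_mul_elemE_of_ne _ i.ne_add_one) _
  have h_comm (i j k l : ℕ) (hij : i + 1 < j) :
      Commute (1 + -t i k • elemE (n + 1) i) (1 + -t j l • elemE (n + 1) j) :=
    commute_one_add_smul_of_mul_eq_zero
      (elemE_mul_elemE_of_ne _ (by omega)) (elemE_mul_elemE_of_ne _ (by omega)) _ _
  exact Matrix.inv_eq_right_inv (inverse_of_factorization_general h_inv h_comm n)
end

section
/- Let n ≥ 1, let M ∈ T^n, and let 1 ≤ k ≤ n. Then ⟨ι(M), R_{n+1−k}⟩ = ⟨M, R_k⟩ + k(n+1−k) in 𝔽₂ (where the integer k(n+1−k) is reduced mod 2). Consequently, if M, M′ ∈ T^n satisfy ⟨M, R_k⟩ = ⟨M′, R_k⟩ for all 1 ≤ k ≤ n, then also ⟨ι(M), R_k⟩ = ⟨ι(M′), R_k⟩ for all 1 ≤ k ≤ n; that is, ι maps each coset of the subspace 𝒟ₙ^⊥ = {M ∈ T^n : ⟨M, R_k⟩ = 0 for all k} onto a coset of 𝒟ₙ^⊥. -/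
/-- `M ∈ T^n`: all entries strictly below the diagonal vanish. -/
def UpperTri (n : ℕ) (M : Matrix (Fin n) (Fin n) (ZMod 2)) : Prop :=
  ∀ i j : Fin n, (j : ℕ) < (i : ℕ) → M i j = 0

/-- The involution `ι : T^n → T^n`, `ι(M)_{ij} = M_{(n+1−j)(n+1−i)} + 1` for `i ≤ j`
(one-based indexing; entries below the diagonal remain `0`). -/
def iotaT (n : ℕ) (M : Matrix (Fin n) (Fin n) (ZMod 2)) : Matrix (Fin n) (Fin n) (ZMod 2) :=
  Matrix.of fun i j => if (i : ℕ) ≤ (j : ℕ) then M (Fin.rev j) (Fin.rev i) + 1 else 0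

/-- The height pairing `⟨M, R_k⟩ = ∑_{1 ≤ r ≤ k ≤ s ≤ n} M_{rs}`. -/
def heightPair (n : ℕ) (M : Matrix (Fin n) (Fin n) (ZMod 2)) (k : Fin n) : ZMod 2 :=
  ∑ r : Fin n, ∑ s : Fin n, if r ≤ k ∧ k ≤ s then M r s else 0

/-!
A summand of the height at `k` has `r ≤ k ≤ s`, so only entries on or above the diagonal matter, and
on these `ι` is reflection in the antidiagonal followed by adding the all-ones matrix. The
reflection `(r, s) ↦ (n + 1 - s, n + 1 - r)` carries the rectangle `[1, k] × [k, n]` onto the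
rectangle belonging to `n + 1 - k`, and the all-ones matrix contributes the number `k (n + 1 - k)`
of cells. Neither fact depends on the coefficients.
-/

section HeightSum

open Finset

variable {n : ℕ} {R : Type*}

/-- The reflection of a square matrix in its antidiagonal. -/
def antitranspose (M : Matrix (Fin n) (Fin n) R) : Matrix (Fin n) (Fin n) R :=
  M.transpose.submatrix Fin.rev Fin.rev

/-- The height pairing `⟨M, R_k⟩` over arbitrary coefficients, as a sum over the rectangle
`R_k = [1, k] × [k, n]`. -/
def heightSum [AddCommMonoid R] (M : Matrix (Fin n) (Fin n) R) (k : Fin n) : R :=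
  ∑ r ∈ Iic k, ∑ s ∈ Ici k, M r s

section AddCommMonoid

variable [AddCommMonoid R]

theorem heightSum_congr {M N : Matrix (Fin n) (Fin n) R} (h : ∀ r s, r ≤ s → M r s = N r s)
    (k : Fin n) : heightSum M k = heightSum N k :=
  sum_congr rfl fun r hr => sum_congr rfl fun s hs =>
    h r s ((mem_Iic.mp hr).trans (mem_Ici.mp hs))

theorem heightSum_add (M N : Matrix (Fin n) (Fin n) R) (k : Fin n) :
    heightSum (M + N) k = heightSum M k + heightSum N k := by
  simp only [heightSum, Matrix.add_apply, sum_add_distrib]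

theorem heightSum_antitranspose_rev (M : Matrix (Fin n) (Fin n) R) (k : Fin n) :
    heightSum (antitranspose M) k.rev = heightSum M k := by
  calc heightSum (antitranspose M) k.rev
      = ∑ r ∈ Ici k, ∑ s ∈ Iic k, M s r := by
        simp only [heightSum, antitranspose, ← Fin.map_revPerm_Ici, ← Fin.map_revPerm_Iic, sum_map,
          Equiv.coe_toEmbedding, Fin.revPerm_apply, Matrix.submatrix_apply,
          Matrix.transpose_apply, Fin.rev_rev]
    _ = heightSum M k := sum_comm

end AddCommMonoid

section AddCommMonoidWithOne

variable [AddCommMonoidWithOne R]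

theorem heightSum_ones (k : Fin n) :
    heightSum (Matrix.of fun _ _ => (1 : R)) k = (((k : ℕ) + 1) * (n - (k : ℕ)) : ℕ) := by
  simp only [heightSum, Matrix.of_apply, sum_const, Fin.card_Iic, Fin.card_Ici]
  rw [← mul_nsmul', nsmul_one]

theorem heightSum_antitranspose_add_ones_rev (M : Matrix (Fin n) (Fin n) R) (k : Fin n) :
    heightSum (antitranspose M + Matrix.of fun _ _ => 1) k.rev
      = heightSum M k + (((k : ℕ) + 1) * (n - (k : ℕ)) : ℕ) := by
  have h_ones : antitranspose M + (Matrix.of fun _ _ => 1)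
      = antitranspose (M + Matrix.of fun _ _ => 1) := rfl
  rw [h_ones, heightSum_antitranspose_rev, heightSum_add, heightSum_ones]

theorem iota_height_relation_general :
    (∀ (M : Matrix (Fin n) (Fin n) R) (k : Fin n),
      heightSum (antitranspose M + Matrix.of fun _ _ => 1) k.rev
        = heightSum M k + (((k : ℕ) + 1) * (n - (k : ℕ)) : ℕ)) ∧
    (∀ M M' : Matrix (Fin n) (Fin n) R, (∀ k, heightSum M k = heightSum M' k) →
      ∀ k, heightSum (antitranspose M + Matrix.of fun _ _ => 1) k
        = heightSum (antitranspose M' + Matrix.of fun _ _ => 1) k) := by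
  refine ⟨heightSum_antitranspose_add_ones_rev, fun M M' h k => ?_⟩
  rw [← Fin.rev_rev k, heightSum_antitranspose_add_ones_rev, heightSum_antitranspose_add_ones_rev,
    h]

end AddCommMonoidWithOne

theorem heightPair_eq_heightSum (M : Matrix (Fin n) (Fin n) (ZMod 2)) (k : Fin n) :
    heightPair n M k = heightSum M k := by
  simp only [heightPair, heightSum, ← filter_ge_eq_Iic, ← filter_le_eq_Ici, sum_filter, ite_and,
    sum_ite_irrel, sum_const_zero]

theorem heightPair_iotaT (M : Matrix (Fin n) (Fin n) (ZMod 2)) (k : Fin n) :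
    heightPair n (iotaT n M) k = heightSum (antitranspose M + Matrix.of fun _ _ => 1) k := by
  rw [heightPair_eq_heightSum]
  exact heightSum_congr (fun _ _ hrs => if_pos hrs) k

end HeightSum

theorem iota_height_relation (n : ℕ) (hn : 1 ≤ n) :
    (∀ M : Matrix (Fin n) (Fin n) (ZMod 2), UpperTri n M → ∀ k : Fin n,
      heightPair n (iotaT n M) (Fin.rev k)
        = heightPair n M k + (((k : ℕ) + 1) * (n - (k : ℕ)) : ℕ)) ∧
    (∀ M M' : Matrix (Fin n) (Fin n) (ZMod 2), UpperTri n M → UpperTri n M' →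
      (∀ k : Fin n, heightPair n M k = heightPair n M' k) →
      ∀ k : Fin n, heightPair n (iotaT n M) k = heightPair n (iotaT n M') k) := by
  simp only [heightPair_iotaT]
  simp only [heightPair_eq_heightSum]
  exact iota_height_relation_general.imp (fun h M _ => h M) (fun h M M' _ _ => h M M')
end

section
/- Let n ≥ 1 and let h : ℐ_n → 𝔽₂ⁿ be the map sending I ∈ ℐ_n to the vector (⟨I, R_1⟩, ⟨I, R_2⟩, …, ⟨I, R_n⟩). Then the image of h is exactly the set of vectors v ∈ 𝔽₂ⁿ that are symmetric with respect to their middle, i.e. satisfy v_k = v_{n+1−k} for all 1 ≤ k ≤ n. -/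
/-- `E_k ∈ T^n`: the matrix whose `(r,s)`-entry is `1` exactly when `s − r = k − 1`
(one-based indexing). -/
def matE (n : ℕ) (k : Fin n) : Matrix (Fin n) (Fin n) (ZMod 2) :=
  Matrix.of fun r s => if (s : ℕ) = (r : ℕ) + (k : ℕ) then 1 else 0

/-- `ℐ_n`: the `𝔽₂`-linear span of `E_1, …, E_n`. -/
def spanI (n : ℕ) : Submodule (ZMod 2) (Matrix (Fin n) (Fin n) (ZMod 2)) :=
  Submodule.span (ZMod 2) (Set.range (matE n))

/-!
Let the depth of an index be its distance to the nearer end of `Fin n`. A vector is symmetric with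
respect to its middle exactly when its entries depend only on the depth. With zero-based indices,
the `k`-th height of the `d`-th superdiagonal is `min (depth d) (depth k) + 1`, so all these height
vectors are symmetric. As `d` runs through the first half of the indices, consecutive differences of
these vectors are the indicators of the sets `{k | d ≤ depth k}`, whose consecutive differences are
in turn the indicators of the level sets of the depth; these span the symmetric vectors.
-/

section Depth

variable {n : ℕ}

/-- The distance from the index `k` to the nearer end of `Fin n`, kept in `Fin n` so that it can
serve as an index itself. -/
def depth (k : Fin n) : Fin n := min k k.rev

lemma val_depth (k : Fin n) : (depth k : ℕ) = min (k : ℕ) (n - (k + 1)) := by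
  rw [depth, Fin.coe_min, Fin.val_rev]

lemma depth_rev (k : Fin n) : depth k.rev = depth k := by
  rw [depth, depth, Fin.rev_rev, min_comm]

lemma two_mul_depth_lt (k : Fin n) : 2 * (depth k : ℕ) < n := by
  rw [val_depth]
  omega

lemma depth_eq_self {k : Fin n} (hk : 2 * (k : ℕ) < n) : depth k = k := by
  rw [Fin.ext_iff, val_depth]
  omega

end Depth

section SymmetricVectors

variable (R : Type*) [Semiring R] (n : ℕ)

/-- The submodule of vectors that are symmetric with respect to their middle. -/
def symmetricVectors : Submodule R (Fin n → R) where
  carrier := {v | ∀ k, v k = v k.rev}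
  add_mem' hu hv k := congrArg₂ (· + ·) (hu k) (hv k)
  zero_mem' _ := rfl
  smul_mem' c _ hv k := congrArg (c • ·) (hv k)

variable {R n}

lemma mem_symmetricVectors {v : Fin n → R} :
    v ∈ symmetricVectors R n ↔ ∀ k, v k = v k.rev :=
  Iff.rfl

lemma apply_depth_of_mem_symmetricVectors {v : Fin n → R} (hv : v ∈ symmetricVectors R n)
    (k : Fin n) : v (depth k) = v k := by
  rcases min_choice k k.rev with h | h
  · rw [depth, h]
  · rw [depth, h, ← mem_symmetricVectors.1 hv k]

end SymmetricVectors

section Semiring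

variable (R : Type*) [Semiring R] (n : ℕ)

/-- The height vector of a matrix, with entries `⟨M, R_k⟩`, as a linear map; over `ZMod 2` its
entries are those of `heightPair`. -/
def heightMap : Matrix (Fin n) (Fin n) R →ₗ[R] (Fin n → R) where
  toFun M k := ∑ r ∈ Finset.Iic k, ∑ s ∈ Finset.Ici k, M r s
  map_add' M N := by
    ext k
    simp [Finset.sum_add_distrib]
  map_smul' c M := by
    ext k
    simp [Finset.mul_sum]

variable {n} in
/-- The matrix with ones on the `d`-th superdiagonal and zeros elsewhere. This is `E_{d+1}` in
one-based indexing, with coefficients in `R`. -/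
def superdiagonal (d : Fin n) : Matrix (Fin n) (Fin n) R :=
  Matrix.of fun r s => if (s : ℕ) = (r : ℕ) + (d : ℕ) then 1 else 0

/-- The upper triangular Toeplitz matrices, as the span of the superdiagonals: the space `ℐ_n` with
coefficients in `R`. -/
def upperToeplitz : Submodule R (Matrix (Fin n) (Fin n) R) :=
  Submodule.span R (Set.range (superdiagonal R))

variable {R n}

lemma heightMap_apply (M : Matrix (Fin n) (Fin n) R) (k : Fin n) :
    heightMap R n M k = ∑ r ∈ Finset.Iic k, ∑ s ∈ Finset.Ici k, M r s :=
  rfl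

lemma sum_Ici_superdiagonal (d k r : Fin n) :
    ∑ s ∈ Finset.Ici k, superdiagonal R d r s =
      if (k : ℕ) ≤ r + d ∧ (r : ℕ) + d < n then 1 else 0 := by
  by_cases hr : (r : ℕ) + d < n
  · have entry_eq (s : Fin n) :
        superdiagonal R d r s = if s = ⟨r + d, hr⟩ then 1 else 0 := by
      simp [superdiagonal, Fin.ext_iff]
    simp [entry_eq, hr, Fin.le_def]
  · rw [if_neg fun h => hr h.2]
    refine Finset.sum_eq_zero fun s _ => if_neg ?_
    omega

lemma card_rows_superdiagonal (d k : Fin n) :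
    ({r ∈ Finset.Iic k | (k : ℕ) ≤ r + d ∧ (r : ℕ) + d < n} : Finset (Fin n)).card =
      min (depth d : ℕ) (depth k) + 1 := by
  have rows_eq : ({r ∈ Finset.Iic k | (k : ℕ) ≤ r + d ∧ (r : ℕ) + d < n} : Finset (Fin n)) =
      Finset.Icc ⟨k - d, by omega⟩ (min k d.rev) := by
    ext r
    simp only [Finset.mem_filter, Finset.mem_Iic, Finset.mem_Icc, le_min_iff, Fin.le_def,
      Fin.val_rev]
    omega
  rw [rows_eq, Fin.card_Icc, Fin.coe_min, Fin.val_rev, val_depth, val_depth]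
  dsimp only
  omega

lemma heightMap_superdiagonal (d k : Fin n) :
    heightMap R n (superdiagonal R d) k = ((min (depth d : ℕ) (depth k) + 1 : ℕ) : R) := by
  simp only [heightMap_apply, sum_Ici_superdiagonal, Finset.sum_boole, card_rows_superdiagonal]

lemma heightMap_superdiagonal_of_two_mul_lt {d : Fin n} (hd : 2 * (d : ℕ) < n) (k : Fin n) :
    heightMap R n (superdiagonal R d) k = ((min (d : ℕ) (depth k) + 1 : ℕ) : R) := by
  rw [heightMap_superdiagonal, depth_eq_self hd]

lemma heightMap_superdiagonal_mem_map (d : Fin n) :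
    heightMap R n (superdiagonal R d) ∈ (upperToeplitz R n).map (heightMap R n) :=
  Submodule.mem_map_of_mem (Submodule.subset_span (Set.mem_range_self d))

lemma map_heightMap_upperToeplitz_le :
    (upperToeplitz R n).map (heightMap R n) ≤ symmetricVectors R n := by
  rw [upperToeplitz, Submodule.map_span_le]
  rintro _ ⟨d, rfl⟩ k
  rw [heightMap_superdiagonal, heightMap_superdiagonal, depth_rev]

end Semiring

section Ring

variable {R : Type*} [Ring R] {n : ℕ}

lemma indicator_le_depth_mem_map (m : ℕ) :
    (fun k : Fin n => if m ≤ (depth k : ℕ) then (1 : R) else 0) ∈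
      (upperToeplitz R n).map (heightMap R n) := by
  by_cases hm : 2 * m < n
  · cases m with
    | zero =>
      convert heightMap_superdiagonal_mem_map (R := R) (⟨0, by omega⟩ : Fin n) with k
      simp [heightMap_superdiagonal_of_two_mul_lt (d := ⟨0, by omega⟩) hm]
    | succ m =>
      convert sub_mem (heightMap_superdiagonal_mem_map (R := R) (⟨m + 1, by omega⟩ : Fin n))
        (heightMap_superdiagonal_mem_map (⟨m, by omega⟩ : Fin n)) with k
      rw [Pi.sub_apply, heightMap_superdiagonal_of_two_mul_lt hm,
        heightMap_superdiagonal_of_two_mul_lt (show 2 * m < n by omega)]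
      split_ifs with hk
      · simp [min_eq_left hk, min_eq_left (Nat.le_of_succ_le hk)]
      · have depth_le : (depth k : ℕ) ≤ m := by omega
        simp [min_eq_right depth_le, min_eq_right (Nat.le_succ_of_le depth_le)]
  · have indicator_eq_zero :
        (fun k : Fin n => if m ≤ (depth k : ℕ) then (1 : R) else 0) = 0 := by
      ext k
      have depth_lt := two_mul_depth_lt k
      exact if_neg (by omega)
    rw [indicator_eq_zero]
    exact zero_mem _

lemma indicator_depth_eq_mem_map (m : Fin n) :
    (fun k : Fin n => if depth k = m then (1 : R) else 0) ∈
      (upperToeplitz R n).map (heightMap R n) := by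
  convert sub_mem (indicator_le_depth_mem_map (R := R) (n := n) m)
    (indicator_le_depth_mem_map (m + 1)) with k
  rw [Pi.sub_apply]
  rcases lt_trichotomy (depth k) m with h | rfl | h
  · simp [h.ne, h.not_ge, h.not_gt]
  · simp
  · simp [h.ne', h.le, h]

lemma symmetricVectors_le_map_heightMap :
    symmetricVectors R n ≤ (upperToeplitz R n).map (heightMap R n) := by
  intro v hv
  have eq_sum_levels : v = ∑ m, v m • fun k => if depth k = m then (1 : R) else 0 := by
    ext k
    simp [apply_depth_of_mem_symmetricVectors hv]
  rw [eq_sum_levels]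
  exact sum_mem fun m _ => Submodule.smul_mem _ _ (indicator_depth_eq_mem_map m)

variable (R n) in
theorem height_image_of_spanI_general :
    (upperToeplitz R n).map (heightMap R n) = symmetricVectors R n :=
  le_antisymm map_heightMap_upperToeplitz_le symmetricVectors_le_map_heightMap

end Ring

lemma heightPair_eq_heightMap (n : ℕ) (M : Matrix (Fin n) (Fin n) (ZMod 2)) :
    heightPair n M = heightMap (ZMod 2) n M := by
  ext k
  simp [heightPair, heightMap_apply, ite_and, ← Finset.sum_filter, Finset.filter_ge_eq_Iic,
    Finset.filter_le_eq_Ici]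

lemma spanI_eq_upperToeplitz (n : ℕ) : spanI n = upperToeplitz (ZMod 2) n :=
  rfl

theorem height_image_of_spanI (n : ℕ) (hn : 1 ≤ n) (v : Fin n → ZMod 2) :
    (∃ I ∈ spanI n, ∀ k : Fin n, heightPair n I k = v k) ↔
      (∀ k : Fin n, v k = v (Fin.rev k)) := by
  simp only [heightPair_eq_heightMap, spanI_eq_upperToeplitz, ← funext_iff (g := v)]
  exact SetLike.ext_iff.1 (height_image_of_spanI_general (ZMod 2) n) v
end

section
/- Let n = 3. For every M ∈ T³, the matrix ι(M) does not belong to the 𝔊₃-orbit of M; that is, the involution ι does not leave invariant any 𝔊₃-orbit in T³. -/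
/-- Safe entry lookup (zero outside range), with zero-based natural-number indices. -/
def ent (n : ℕ) (M : Matrix (Fin n) (Fin n) (ZMod 2)) (r s : ℕ) : ZMod 2 :=
  if h : r < n ∧ s < n then M ⟨r, h.1⟩ ⟨s, h.2⟩ else 0

/-- The generator `g_{ij}` of `𝔊_n` (here `i ≤ j` are zero-based, corresponding to the
one-based indices `i+1 ≤ j+1`): it adds the trace `M_{ij} + M_{i+1,j+1}` of the `2×2`
submatrix with rows `i, i+1` and columns `j, j+1` to each entry of that submatrix lying
in the upper triangle. -/
def gmove (n i j : ℕ) (M : Matrix (Fin n) (Fin n) (ZMod 2)) :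
    Matrix (Fin n) (Fin n) (ZMod 2) :=
  Matrix.of fun r s =>
    if ((r : ℕ) = i ∨ (r : ℕ) = i + 1) ∧ ((s : ℕ) = j ∨ (s : ℕ) = j + 1)
        ∧ (r : ℕ) ≤ (s : ℕ)
    then M r s + (ent n M i j + ent n M (i + 1) (j + 1))
    else M r s

/-- One application of a generator `g_{ij}`, `1 ≤ i ≤ j ≤ n−1` (one-based);
in zero-based indices `i ≤ j` and `j + 2 ≤ n`. -/
def Gstep (n : ℕ) (M M' : Matrix (Fin n) (Fin n) (ZMod 2)) : Prop :=
  ∃ i j : ℕ, i ≤ j ∧ j + 2 ≤ n ∧ M' = gmove n i j M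

/-- `N` belongs to the `𝔊_n`-orbit of `M`: the reflexive-transitive closure of the
generating moves (each generator is an involution, so this is the orbit equivalence). -/
def InOrbit (n : ℕ) (M N : Matrix (Fin n) (Fin n) (ZMod 2)) : Prop :=
  Relation.ReflTransGen (Gstep n) M N

/-!
Each generator `g_{ij}` is `M ↦ M + tr_{ij}(M) • E_{ij}`, where `E_{ij}` is the indicator of the
entries it changes. If a quadratic form `Q` satisfies `Q(E_{ij}) = 1` and has polar form
`M ↦ tr_{ij}(M)` against `E_{ij}`, then `g_{ij}` is the reflection of `Q` in `E_{ij}`, so `Q` is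
constant on orbits. For `n = 3` such a form is the sum of the products of adjacent entries around
the pentagon `M₀₀, M₁₁, M₂₂, M₀₁, M₁₂`. Reflection in the antidiagonal is a symmetry of the
pentagon, and adding `1` to all five entries changes `Q` by `5` plus twice the sum of the entries;
hence `Q(ι M) = Q(M) + 1`.
-/

open QuadraticMap

theorem quadraticForm_sub_polar_smul {R V : Type*} [CommRing R] [AddCommGroup V] [Module R V]
    (Q : QuadraticForm R V) {v : V} (hv : Q v = 1) (x : V) :
    Q (x - polar Q x v • v) = Q x := by
  rw [sub_eq_add_neg, ← neg_smul, QuadraticMap.map_add Q, QuadraticMap.map_smul,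
    polar_smul_right, hv, smul_eq_mul, smul_eq_mul]
  ring

section Generators

variable {n : ℕ}

/-- The matrix `E_{ij}` (zero-based indices): the indicator of the upper-triangular part of the
`2 × 2` block with rows `i, i + 1` and columns `j, j + 1`, the direction in which `g_{ij}` moves. -/
def upperBlock (n i j : ℕ) : Matrix (Fin n) (Fin n) (ZMod 2) :=
  Matrix.of fun r s =>
    if ((r : ℕ) = i ∨ (r : ℕ) = i + 1) ∧ ((s : ℕ) = j ∨ (s : ℕ) = j + 1) ∧ (r : ℕ) ≤ (s : ℕ)
    then 1 else 0

/-- The trace `tr_{ij}` of the `2 × 2` block with rows `i, i + 1` and columns `j, j + 1`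
(zero-based indices), which `g_{ij}` adds to the entries of that block. -/
def blockTrace (i j : ℕ) (M : Matrix (Fin n) (Fin n) (ZMod 2)) : ZMod 2 :=
  ent n M i j + ent n M (i + 1) (j + 1)

theorem gmove_eq_add_smul (i j : ℕ) (M : Matrix (Fin n) (Fin n) (ZMod 2)) :
    gmove n i j M = M + blockTrace i j M • upperBlock n i j := by
  ext r s
  simp only [gmove, blockTrace, upperBlock, Matrix.add_apply, Matrix.smul_apply, Matrix.of_apply,
    smul_eq_mul, mul_ite, mul_one, mul_zero]
  split_ifs
  · rfl
  · rw [add_zero]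

/-- A quadratic form is adapted to `𝔊_n` if every generator `g_{ij}` acts as its reflection in
`E_{ij}`: it takes the value `1` on `E_{ij}`, and its polar form against `E_{ij}` is `tr_{ij}`. -/
structure IsAdapted (Q : QuadraticForm (ZMod 2) (Matrix (Fin n) (Fin n) (ZMod 2))) : Prop where
  apply_upperBlock : ∀ i j, i ≤ j → j + 2 ≤ n → Q (upperBlock n i j) = 1
  polar_upperBlock : ∀ i j, i ≤ j → j + 2 ≤ n → ∀ M, polar Q M (upperBlock n i j) = blockTrace i j M

namespace IsAdapted

variable {Q : QuadraticForm (ZMod 2) (Matrix (Fin n) (Fin n) (ZMod 2))}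
  {M N : Matrix (Fin n) (Fin n) (ZMod 2)}

theorem apply_eq_of_gstep (hQ : IsAdapted Q) (h : Gstep n M N) : Q N = Q M := by
  obtain ⟨i, j, hij, hjn, rfl⟩ := h
  have gmove_eq_reflection :
      gmove n i j M = M - polar Q M (upperBlock n i j) • upperBlock n i j := by
    rw [gmove_eq_add_smul, hQ.polar_upperBlock i j hij hjn, sub_eq_add_neg, ← neg_smul,
      CharTwo.neg_eq]
  rw [gmove_eq_reflection, quadraticForm_sub_polar_smul Q (hQ.apply_upperBlock i j hij hjn)]

theorem apply_eq_of_inOrbit (hQ : IsAdapted Q) (h : InOrbit n M N) : Q N = Q M := by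
  induction h with
  | refl => rfl
  | tail _ hstep ih => rw [hQ.apply_eq_of_gstep hstep, ih]

end IsAdapted

end Generators

section PentagonForm

open Matrix (entryLinearMap)

/-- The sum of the products of adjacent entries around the pentagon
`M₀₀, M₁₁, M₂₂, M₀₁, M₁₂`; it is the orbit invariant that `ι` changes. The entry `M₀₂` does not
occur. -/
def pentagonForm : QuadraticForm (ZMod 2) (Matrix (Fin 3) (Fin 3) (ZMod 2)) :=
  let x (i j : Fin 3) := entryLinearMap (ZMod 2) (ZMod 2) i j
  linMulLin (x 0 0) (x 1 1) + linMulLin (x 1 1) (x 2 2) + linMulLin (x 2 2) (x 0 1) +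
    linMulLin (x 0 1) (x 1 2) + linMulLin (x 1 2) (x 0 0)

variable (M N : Matrix (Fin 3) (Fin 3) (ZMod 2))

theorem pentagonForm_apply :
    pentagonForm M =
      M 0 0 * M 1 1 + M 1 1 * M 2 2 + M 2 2 * M 0 1 + M 0 1 * M 1 2 + M 1 2 * M 0 0 :=
  rfl

theorem polar_pentagonForm :
    polar pentagonForm M N =
      N 0 0 * (M 1 1 + M 1 2) + N 1 1 * (M 0 0 + M 2 2) + N 2 2 * (M 1 1 + M 0 1) +
        N 0 1 * (M 2 2 + M 1 2) + N 1 2 * (M 0 1 + M 0 0) := by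
  simp only [polar, pentagonForm_apply, Matrix.add_apply]
  ring

theorem isAdapted_pentagonForm : IsAdapted pentagonForm where
  apply_upperBlock i j hij hj := by
    have hj : j ≤ 1 := by omega
    interval_cases j <;> interval_cases i <;> decide
  polar_upperBlock i j hij hj M := by
    have hj : j ≤ 1 := by omega
    have two_eq_zero : (2 : ZMod 2) = 0 := CharTwo.two_eq_zero
    interval_cases j <;> interval_cases i
    · calc
        polar pentagonForm M (upperBlock 3 0 0)
          = (M 1 1 + M 1 2) + (M 0 0 + M 2 2) + (M 2 2 + M 1 2) := by
            simp [polar_pentagonForm, upperBlock]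
        _ = M 0 0 + M 1 1 := by
          linear_combination (M 1 2 + M 2 2) * two_eq_zero
        _ = blockTrace 0 0 M := rfl
    · calc
        polar pentagonForm M (upperBlock 3 0 1)
          = (M 0 0 + M 2 2) + (M 2 2 + M 1 2) + (M 0 1 + M 0 0) := by
            simp [polar_pentagonForm, upperBlock]
        _ = M 0 1 + M 1 2 := by
          linear_combination (M 0 0 + M 2 2) * two_eq_zero
        _ = blockTrace 0 1 M := rfl
    · calc
        polar pentagonForm M (upperBlock 3 1 1)
          = (M 0 0 + M 2 2) + (M 1 1 + M 0 1) + (M 0 1 + M 0 0) := by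
            simp [polar_pentagonForm, upperBlock]
        _ = M 1 1 + M 2 2 := by
          linear_combination (M 0 0 + M 0 1) * two_eq_zero
        _ = blockTrace 1 1 M := rfl

theorem pentagonForm_iotaT : pentagonForm (iotaT 3 M) = pentagonForm M + 1 := by
  have two_eq_zero : (2 : ZMod 2) = 0 := CharTwo.two_eq_zero
  calc
    pentagonForm (iotaT 3 M)
      = (M 2 2 + 1) * (M 1 1 + 1) + (M 1 1 + 1) * (M 0 0 + 1) + (M 0 0 + 1) * (M 1 2 + 1) +
          (M 1 2 + 1) * (M 0 1 + 1) + (M 0 1 + 1) * (M 2 2 + 1) := rfl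
    _ = pentagonForm M + 2 * (M 0 0 + M 1 1 + M 2 2 + M 0 1 + M 1 2) + 5 := by
      rw [pentagonForm_apply]
      ring
    _ = pentagonForm M + 1 := by
      linear_combination (M 0 0 + M 1 1 + M 2 2 + M 0 1 + M 1 2 + 2) * two_eq_zero

end PentagonForm

theorem iota_preserves_no_orbit_n3 (M : Matrix (Fin 3) (Fin 3) (ZMod 2))
    (hM : UpperTri 3 M) : ¬ InOrbit 3 M (iotaT 3 M) := by
  intro horbit
  have hinvariant : pentagonForm (iotaT 3 M) = pentagonForm M :=
    isAdapted_pentagonForm.apply_eq_of_inOrbit horbit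
  rw [pentagonForm_iotaT, add_eq_left] at hinvariant
  exact one_ne_zero hinvariant
end
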